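/- arXiv:1309.0087 — 5 statements merged into one kernel-verified Lean document; each statement's English description precedes it below -/
import Mathlib

section
/- Let $G$ be a weighted graph on a finite vertex set $V$ with weighted adjacency matrix $A$. Then $\det A = \sum_{\Gamma \in S(G)} (-1)^{sg(\Gamma)}\, 2^{c(\Gamma)} \prod_{e \in P^2(\Gamma)} w(e)^2 \prod_{e \in C(\Gamma)} w(e)$, where the sum runs over all sesquivalent spanning subgraphs $\Gamma$ of $G$. -/
open Finset

variable {V : Type*}

/-- The degree of a vertex `v` in the (sub)graph given by the edge set `Γ`. -/
def edgeDeg [Fintype V] [DecidableEq V] (Γ : Finset (Sym2 V)) (v : V) : ℕ :=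
  (Γ.filter (fun e => v ∈ e)).card

/-- `Γ` (a finite set of edges, i.e. of unordered pairs of vertices) is a sesquivalent
spanning subgraph of the weighted graph with edge-weight function `w` : all its edges are
genuine edges of the graph (non-loops of nonzero weight), every vertex has degree 1 or 2,
and no vertex of degree 1 is adjacent to a vertex of degree 2 — equivalently, every
connected component is a single edge (`K₂`) or a cycle, and every vertex is covered. -/
def IsSesqSpanning [Fintype V] [DecidableEq V] (w : Sym2 V → ℝ) (Γ : Finset (Sym2 V)) : Prop :=
  (∀ e ∈ Γ, ¬ e.IsDiag ∧ w e ≠ 0) ∧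
  (∀ v : V, edgeDeg Γ v = 1 ∨ edgeDeg Γ v = 2) ∧
  (∀ u v : V, s(u, v) ∈ Γ → edgeDeg Γ u = 1 → edgeDeg Γ v = 1)

/-- `c(Γ)`: the number of connected components of `Γ` which are cycles, i.e. in which
every vertex has degree 2. -/
noncomputable def cycleCompCount [Fintype V] [DecidableEq V] (Γ : Finset (Sym2 V)) : ℕ :=
  Nat.card {C : (SimpleGraph.fromEdgeSet (↑Γ : Set (Sym2 V))).ConnectedComponent //
    ∀ v ∈ C.supp, edgeDeg Γ v = 2}

/-- `sg(Γ)`: the number of connected components of `Γ` with an even number of vertices. -/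
noncomputable def evenCompCount [Fintype V] [DecidableEq V] (Γ : Finset (Sym2 V)) : ℕ :=
  Nat.card {C : (SimpleGraph.fromEdgeSet (↑Γ : Set (Sym2 V))).ConnectedComponent //
    Even (Nat.card C.supp)}

/-- `P²(Γ)`: the edges of `Γ` lying in single-edge (`K₂`) components, i.e. whose two
endpoints both have degree 1. -/
def matchingEdges [Fintype V] [DecidableEq V] (Γ : Finset (Sym2 V)) : Finset (Sym2 V) :=
  Γ.filter (fun e => ∀ v : V, v ∈ e → edgeDeg Γ v = 1)

/-- `C(Γ)`: the edges of `Γ` lying in cycle components, i.e. whose two endpoints both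
have degree 2. -/
def cycleEdges [Fintype V] [DecidableEq V] (Γ : Finset (Sym2 V)) : Finset (Sym2 V) :=
  Γ.filter (fun e => ∀ v : V, v ∈ e → edgeDeg Γ v = 2)

/-!
Expand the determinant by Leibniz and group the permutations `σ` by the undirected graph formed by
the edges `{v, σ v}`. A nonzero term comes from a derangement, whose graph is sesquivalent: its
2-cycles become single edges, each traversed twice and hence contributing a squared weight, and its
longer cycles become cycle components. The sign of `σ` depends only on the parities of the component
sizes. Conversely, `Γ` arises from exactly `2 ^ c(Γ)` permutations, one for each choice of a
direction of travel along every cycle component.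
-/

open Equiv Equiv.Perm SimpleGraph

/-- The simple graph on `V` whose edges are the non-loops of `Γ`. -/
abbrev edgeGraph (Γ : Finset (Sym2 V)) : SimpleGraph V :=
  fromEdgeSet (Γ : Set (Sym2 V))

/-- The edge set of the functional graph of `σ` with directions forgotten, so that a 2-cycle of `σ`
contributes a single edge and a fixed point a loop. -/
def permEdges [Fintype V] [DecidableEq V] (σ : Perm V) : Finset (Sym2 V) :=
  univ.image fun v => s(v, σ v)

/-- The unweighted part of `IsSesqSpanning`: `Γ` has no loops, and every vertex lies in a component
that is a single edge or a cycle. -/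
structure IsSesquivalent [Fintype V] [DecidableEq V] (Γ : Finset (Sym2 V)) : Prop where
  not_isDiag : ∀ e ∈ Γ, ¬ e.IsDiag
  edgeDeg_eq_one_or_two : ∀ v, edgeDeg Γ v = 1 ∨ edgeDeg Γ v = 2
  edgeDeg_eq_one_of_mem : ∀ u v, s(u, v) ∈ Γ → edgeDeg Γ u = 1 → edgeDeg Γ v = 1

/-- The permutation that follows `σ⁻¹` on the `σ`-invariant set `s` and `σ` elsewhere. -/
def reverseOn (σ : Perm V) (s : Set V) [DecidablePred (· ∈ s)] (hs : ∀ v, σ v ∈ s ↔ v ∈ s) :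
    Perm V where
  toFun v := if v ∈ s then σ.symm v else σ v
  invFun v := if v ∈ s then σ v else σ.symm v
  left_inv v := by
    have hs' : σ.symm v ∈ s ↔ v ∈ s := by simpa using (hs (σ.symm v)).symm
    by_cases hv : v ∈ s <;> simp [hv, hs, hs']
  right_inv v := by
    have hs' : σ.symm v ∈ s ↔ v ∈ s := by simpa using (hs (σ.symm v)).symm
    by_cases hv : v ∈ s <;> simp [hv, hs, hs']

/-- A connected component of `Γ` that is a cycle, i.e. in which every vertex has degree 2; these are
the components counted by `cycleCompCount`. -/
abbrev CycleComponent [Fintype V] [DecidableEq V] (Γ : Finset (Sym2 V)) : Type _ :=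
  {C : (edgeGraph Γ).ConnectedComponent // ∀ v ∈ C.supp, edgeDeg Γ v = 2}

section Cycles

theorem exists_next_of_isCycle {G : SimpleGraph V} {u : V} {p : G.Walk u u} (hp : p.IsCycle) :
    ∃ next : V → V, ∀ d ∈ p.darts, next d.fst = d.snd := by
  have hnodup : (p.darts.map (·.fst)).Nodup := p.map_fst_darts ▸ hp.nodup_dropLast_support
  have hsnd (v : V) : ∃ x, ∀ d ∈ p.darts, d.fst = v → d.snd = x := by
    by_cases h : ∃ d ∈ p.darts, d.fst = v
    · obtain ⟨d, hd, rfl⟩ := h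
      exact ⟨d.snd, fun d' hd' h => congrArg (·.snd) (List.inj_on_of_nodup_map hnodup hd' hd h)⟩
    · exact ⟨v, fun d hd hdv => (h ⟨d, hd, hdv⟩).elim⟩
  choose next hnext using hsnd
  exact ⟨next, fun d hd => (hnext _ d hd rfl).symm⟩

theorem exists_component_orientation_of_isCycles [Finite V] {H : SimpleGraph V} (hH : H.IsCycles)
    (c : H.ConnectedComponent) :
    ∃ next : V → V, ∀ u ∈ c.supp, ∀ v, H.Adj u v →
      H.Adj u (next u) ∧ (next u = v ∨ next v = u) := by
  classical
  have := Fintype.ofFinite V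
  by_cases hc : ∃ x ∈ c.supp, (H.neighborSet x).Nonempty
  swap
  · exact ⟨id, fun u hu v huv => (hc ⟨u, hu, v, huv⟩).elim⟩
  obtain ⟨x, hx, hne⟩ := hc
  obtain ⟨p, hp, hverts⟩ := hH.exists_cycle_toSubgraph_verts_eq_connectedComponentSupp hx hne
  obtain ⟨next, hnext⟩ := exists_next_of_isCycle hp
  refine ⟨next, fun u hu v huv => ⟨?_, ?_⟩⟩
  · rw [← hverts, Walk.mem_verts_toSubgraph] at hu
    have hu' : u ∈ p.darts.map (·.fst) := by
      rw [p.map_fst_darts, ← p.tail_support_perm_dropLast_support.mem_iff]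
      rcases p.mem_support_iff.1 hu with rfl | hu
      · exact Walk.end_mem_tail_support hp.not_nil
      · exact hu
    obtain ⟨d, hd, rfl⟩ := List.mem_map.1 hu'
    exact hnext d hd ▸ d.adj
  · have huv' : s(u, v) ∈ p.edges := by
      rw [← Walk.mem_edges_toSubgraph, Subgraph.mem_edgeSet]
      exact (hp.adj_toSubgraph_iff_of_isCycles hH (hverts ▸ hu) v).2 huv
    obtain ⟨d, hd, hduv⟩ := List.mem_map.1 huv'
    rcases dart_edge_eq_mk'_iff'.1 hduv with ⟨rfl, rfl⟩ | ⟨rfl, rfl⟩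
    · exact .inl (hnext d hd)
    · exact .inr (hnext d hd)

theorem exists_orientation_of_isCycles [Finite V] {H : SimpleGraph V} (hH : H.IsCycles) :
    ∃ next : V → V, ∀ u v, H.Adj u v → H.Adj u (next u) ∧ (next u = v ∨ next v = u) := by
  choose next hnext using exists_component_orientation_of_isCycles hH
  refine ⟨fun v => next (H.connectedComponentMk v) v, fun u v huv => ?_⟩
  have huv' : H.connectedComponentMk v = H.connectedComponentMk u :=
    ConnectedComponent.sound huv.symm.reachable
  simpa only [huv'] using hnext _ u rfl v huv

end Cycles

section Sesquivalent

variable [Fintype V] [DecidableEq V] {Γ : Finset (Sym2 V)} {σ τ : Perm V} {u v : V}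

theorem isSesqSpanning_iff {w : Sym2 V → ℝ} :
    IsSesqSpanning w Γ ↔ IsSesquivalent Γ ∧ ∀ e ∈ Γ, w e ≠ 0 :=
  ⟨fun ⟨he, hdeg, hone⟩ => ⟨⟨fun e h => (he e h).1, hdeg, hone⟩, fun e h => (he e h).2⟩,
    fun ⟨⟨hdiag, hdeg, hone⟩, hw⟩ => ⟨fun e h => ⟨hdiag e h, hw e h⟩, hdeg, hone⟩⟩

theorem edgeDeg_eq_card_neighbors (Γ : Finset (Sym2 V)) (v : V) :
    edgeDeg Γ v = #{u | s(v, u) ∈ Γ} := by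
  rw [edgeDeg, ← card_image_of_injective {u | s(v, u) ∈ Γ} fun _ _ => (Sym2.congr_right (a := v)).1]
  refine congrArg card ?_
  ext e
  simp only [mem_filter, mem_image, mem_univ, true_and, Sym2.mem_iff_exists]
  grind

theorem mem_permEdges : s(u, v) ∈ permEdges σ ↔ σ u = v ∨ σ v = u := by
  simp only [permEdges, mem_image, mem_univ, true_and, Sym2.eq_iff]
  grind

theorem mk_apply_mem_permEdges (σ : Perm V) (v : V) : s(v, σ v) ∈ permEdges σ :=
  mem_permEdges.2 (.inl rfl)

theorem edgeDeg_permEdges (σ : Perm V) (v : V) :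
    edgeDeg (permEdges σ) v = if σ (σ v) = v then 1 else 2 := by
  have hneighbors : univ.filter (s(v, ·) ∈ permEdges σ) = {σ v, σ.symm v} := by
    ext u
    simp [mem_permEdges, Equiv.eq_symm_apply, eq_comm]
  rw [edgeDeg_eq_card_neighbors, hneighbors]
  split_ifs with h
  · rw [(Equiv.eq_symm_apply σ).2 h, pair_eq_singleton, card_singleton]
  · exact card_pair (mt (Equiv.eq_symm_apply σ).1 h)

namespace IsSesquivalent

theorem edgeDeg_eq_of_mem (hΓ : IsSesquivalent Γ) (huv : s(u, v) ∈ Γ) :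
    edgeDeg Γ u = edgeDeg Γ v := by
  have := hΓ.edgeDeg_eq_one_of_mem u v huv
  have := hΓ.edgeDeg_eq_one_of_mem v u (Sym2.eq_swap ▸ huv)
  have := hΓ.edgeDeg_eq_one_or_two u
  have := hΓ.edgeDeg_eq_one_or_two v
  lia

theorem mk_mem_matchingEdges (hΓ : IsSesquivalent Γ) (huv : s(u, v) ∈ Γ) :
    s(u, v) ∈ matchingEdges Γ ↔ edgeDeg Γ u = 1 := by
  simp [matchingEdges, huv, hΓ.edgeDeg_eq_of_mem huv]

theorem mk_mem_cycleEdges (hΓ : IsSesquivalent Γ) (huv : s(u, v) ∈ Γ) :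
    s(u, v) ∈ cycleEdges Γ ↔ edgeDeg Γ u = 2 := by
  simp [cycleEdges, huv, hΓ.edgeDeg_eq_of_mem huv]

theorem prod_matchingEdges_mul_prod_cycleEdges {M : Type*} [CommMonoid M] (hΓ : IsSesquivalent Γ)
    (f : Sym2 V → M) : (∏ e ∈ matchingEdges Γ, f e) * ∏ e ∈ cycleEdges Γ, f e = ∏ e ∈ Γ, f e := by
  have hcycle : cycleEdges Γ = {e ∈ Γ | e ∉ matchingEdges Γ} := by
    ext e
    induction e with | _ u v =>
    by_cases he : s(u, v) ∈ Γ
    · have := hΓ.edgeDeg_eq_one_or_two u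
      rw [mem_filter, hΓ.mk_mem_cycleEdges he, hΓ.mk_mem_matchingEdges he]
      grind
    · simp [cycleEdges, he]
  have hmatching : {e ∈ Γ | e ∈ matchingEdges Γ} = matchingEdges Γ := by
    rw [filter_mem_eq_inter]
    exact inter_eq_right.2 (filter_subset _ _)
  rw [hcycle, ← prod_filter_mul_prod_filter_not Γ (· ∈ matchingEdges Γ), hmatching]

theorem isCycles_cycleEdges (hΓ : IsSesquivalent Γ) : (edgeGraph (cycleEdges Γ)).IsCycles := by
  rintro v ⟨u, huv⟩
  have hv : edgeDeg Γ v = 2 := (mem_filter.1 huv.1).2 v (Sym2.mem_mk_left v u)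
  have hneighbors : (edgeGraph (cycleEdges Γ)).neighborSet v =
      ({x | s(v, x) ∈ Γ} : Finset V) := by
    ext x
    have hx (h : s(v, x) ∈ Γ) : s(v, x) ∈ cycleEdges Γ ∧ v ≠ x :=
      ⟨(hΓ.mk_mem_cycleEdges h).2 hv, by simpa using hΓ.not_isDiag _ h⟩
    simpa using ⟨fun h => (mem_filter.1 h.1).1, hx⟩
  rw [hneighbors, Set.ncard_coe_finset, ← edgeDeg_eq_card_neighbors, hv]

theorem exists_mem (hΓ : IsSesquivalent Γ) (v : V) : ∃ u, s(v, u) ∈ Γ := by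
  have hpos : 0 < edgeDeg Γ v := by have := hΓ.edgeDeg_eq_one_or_two v; lia
  rw [edgeDeg_eq_card_neighbors, card_pos] at hpos
  simpa [Finset.Nonempty] using hpos

theorem exists_orientation (hΓ : IsSesquivalent Γ) :
    ∃ next : V → V, (∀ v, s(v, next v) ∈ Γ) ∧ ∀ u v, s(u, v) ∈ Γ → next u = v ∨ next v = u := by
  obtain ⟨next, hnext⟩ := exists_orientation_of_isCycles hΓ.isCycles_cycleEdges
  choose mate hmate using hΓ.exists_mem
  have hone {u v : V} (hu : edgeDeg Γ u = 1) (huv : s(u, v) ∈ Γ) : mate u = v := by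
    rw [edgeDeg_eq_card_neighbors] at hu
    exact card_le_one.1 hu.le _ (by simpa using hmate u) _ (by simpa using huv)
  have htwo {u v : V} (hu : edgeDeg Γ u ≠ 1) (huv : s(u, v) ∈ Γ) :
      s(u, next u) ∈ Γ ∧ (next u = v ∨ next v = u) := by
    have huv' : s(u, v) ∈ cycleEdges Γ :=
      (hΓ.mk_mem_cycleEdges huv).2 ((hΓ.edgeDeg_eq_one_or_two u).resolve_left hu)
    have hne : u ≠ v := by simpa using hΓ.not_isDiag _ huv
    exact (hnext u v ⟨huv', hne⟩).imp_left fun h => (mem_filter.1 h.1).1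
  refine ⟨fun v => if edgeDeg Γ v = 1 then mate v else next v, fun v => ?_, fun u v huv => ?_⟩
  · dsimp only
    split_ifs with hv
    · exact hmate v
    · exact (htwo hv (hmate v)).1
  · simp only [← hΓ.edgeDeg_eq_of_mem huv]
    split_ifs with hu
    · exact .inl (hone hu huv)
    · exact (htwo hu huv).2

theorem exists_permEdges_eq (hΓ : IsSesquivalent Γ) : ∃ σ : Perm V, permEdges σ = Γ := by
  obtain ⟨next, hmem, hnext⟩ := hΓ.exists_orientation
  -- A vertex missed by `next` is a leaf, so its unique neighbour is a leaf too and must point back.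
  have hsurj : Function.Surjective next := by
    intro u
    by_contra! hu
    have huniq (v : V) (huv : s(u, v) ∈ Γ) : next u = v :=
      (hnext u v huv).resolve_right (hu v)
    have hdeg : edgeDeg Γ u = 1 := by
      rw [edgeDeg_eq_card_neighbors, card_eq_one]
      exact ⟨next u, by ext v; simpa using ⟨fun h => (huniq v h).symm, fun h => h ▸ hmem u⟩⟩
    have hdeg' : edgeDeg Γ (next u) = 1 := hΓ.edgeDeg_eq_one_of_mem _ _ (hmem u) hdeg
    rw [edgeDeg_eq_card_neighbors] at hdeg'
    exact hu (next u) (card_le_one.1 hdeg'.le _ (by simpa using hmem (next u)) _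
      (by simpa [Sym2.eq_swap] using hmem u))
  refine ⟨.ofBijective next hsurj.bijective_of_finite, ?_⟩
  ext e
  induction e with | _ u v =>
  rw [mem_permEdges]
  refine ⟨?_, hnext u v⟩
  rintro (rfl | rfl)
  · exact hmem u
  · exact Sym2.eq_swap ▸ hmem v

theorem mem_derangements (hΓ : IsSesquivalent (permEdges σ)) : σ ∈ derangements V :=
  fun v hv => hΓ.not_isDiag _ (mk_apply_mem_permEdges σ v) (by simp [hv])

end IsSesquivalent

theorem isSesquivalent_permEdges (hσ : σ ∈ derangements V) : IsSesquivalent (permEdges σ) where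
  not_isDiag := by simpa [permEdges] using fun v => (hσ v).symm
  edgeDeg_eq_one_or_two v := by rw [edgeDeg_permEdges]; split_ifs <;> simp
  edgeDeg_eq_one_of_mem u v huv := by
    have h : σ (σ u) = u → σ (σ v) = v := by
      rcases mem_permEdges.1 huv with rfl | rfl
      · exact congrArg σ
      · exact fun h => σ.injective h
    simpa [edgeDeg_permEdges] using h

section Weights

theorem card_fiber_mk_apply (hσ : σ ∈ derangements V) (v : V) :
    #{u | s(u, σ u) = s(v, σ v)} = if σ (σ v) = v then 2 else 1 := by
  have hfiber (u : V) : s(u, σ u) = s(v, σ v) ↔ u = v ∨ u = σ v ∧ σ (σ v) = v := by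
    rw [Sym2.eq_iff]
    grind
  simp only [hfiber]
  split_ifs with h
  · rw [← card_pair (hσ v).symm]
    congr 1
    ext u
    simp [h]
  · simp [h, filter_eq']

theorem prod_mk_apply {M : Type*} [CommMonoid M] (w : Sym2 V → M) (hσ : σ ∈ derangements V) :
    ∏ v, w s(v, σ v) =
      (∏ e ∈ matchingEdges (permEdges σ), w e ^ 2) * ∏ e ∈ cycleEdges (permEdges σ), w e := by
  have hΓ : IsSesquivalent (permEdges σ) := isSesquivalent_permEdges hσ
  have hmult (v : V) : #{u | s(u, σ u) = s(v, σ v)} =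
      if edgeDeg (permEdges σ) v = 1 then 2 else 1 := by
    rw [card_fiber_mk_apply hσ, edgeDeg_permEdges]
    split_ifs <;> simp_all
  rw [prod_comp w fun v => s(v, σ v)]
  change ∏ e ∈ permEdges σ, w e ^ #{u | s(u, σ u) = e} = _
  rw [← hΓ.prod_matchingEdges_mul_prod_cycleEdges]
  congr 1 <;> refine prod_congr rfl fun e he => ?_
  · obtain ⟨v, -, rfl⟩ := mem_image.1 (mem_filter.1 he).1
    rw [hmult, if_pos ((hΓ.mk_mem_matchingEdges (mk_apply_mem_permEdges σ v)).1 he)]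
  · obtain ⟨v, -, rfl⟩ := mem_image.1 (mem_filter.1 he).1
    have hv := (hΓ.mk_mem_cycleEdges (mk_apply_mem_permEdges σ v)).1 he
    rw [hmult, if_neg (by lia), pow_one]

end Weights

theorem reachable_apply (σ : Perm V) (v : V) :
    (edgeGraph (permEdges σ)).Reachable v (σ v) := by
  by_cases hv : v = σ v
  · rw [← hv]
  · exact Adj.reachable ⟨mk_apply_mem_permEdges σ v, hv⟩

theorem reachable_permEdges_iff :
    (edgeGraph (permEdges σ)).Reachable u v ↔ σ.SameCycle u v := by
  constructor
  · rintro ⟨p⟩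
    induction p with
    | nil => exact .refl σ _
    | cons h _ ih =>
      refine .trans ?_ ih
      rcases mem_permEdges.1 h.1 with rfl | rfl
      · exact sameCycle_apply_right.2 (.refl σ _)
      · exact sameCycle_apply_left.2 (.refl σ _)
  · intro h
    obtain ⟨n, rfl⟩ := h.exists_nat_pow_eq
    induction n with
    | zero => rfl
    | succ n ih =>
      rw [pow_succ', Perm.mul_apply]
      exact (ih ⟨n, rfl⟩).trans (reachable_apply σ _)

theorem connectedComponentMk_permEdges_eq_iff :
    (edgeGraph (permEdges σ)).connectedComponentMk u =
      (edgeGraph (permEdges σ)).connectedComponentMk v ↔ σ.SameCycle u v :=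
  ConnectedComponent.eq.trans reachable_permEdges_iff

section Sign

theorem sign_eq_neg_one_pow_card_even_cycles (σ : Perm V) :
    sign σ = (-1) ^ #{c ∈ σ.cycleFactorsFinset | Even #c.support} := by
  rw [sign_of_cycleType', cycleType_def, Multiset.map_map]
  change ∏ c ∈ σ.cycleFactorsFinset, -(-1) ^ #c.support = _
  rw [← prod_const, prod_filter]
  refine prod_congr rfl fun c _ => ?_
  split_ifs with hc
  · rw [hc.neg_one_pow]
  · rw [(Nat.not_even_iff_odd.1 hc).neg_one_pow, neg_neg]

/-- The cycle of `σ` that runs through a component of its functional graph. -/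
def componentCycle (σ : Perm V) : (edgeGraph (permEdges σ)).ConnectedComponent → Perm V :=
  ConnectedComponent.lift σ.cycleOf fun _ _ p _ =>
    (reachable_permEdges_iff.1 p.reachable).cycleOf_eq

theorem coe_support_componentCycle (hσ : σ ∈ derangements V)
    (C : (edgeGraph (permEdges σ)).ConnectedComponent) :
    ((componentCycle σ C).support : Set V) = C.supp := by
  induction C using ConnectedComponent.ind with | _ v =>
  ext u
  change u ∈ (σ.cycleOf v).support ↔ _
  rw [mem_support_cycleOf_iff' (hσ v), ConnectedComponent.mem_supp_iff,
    connectedComponentMk_permEdges_eq_iff, sameCycle_comm]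

theorem componentCycle_injective (hσ : σ ∈ derangements V) :
    Function.Injective (componentCycle σ) := fun C D h =>
  ConnectedComponent.supp_injective (by simp only [← coe_support_componentCycle hσ, h])

theorem card_supp_eq_card_support_componentCycle (hσ : σ ∈ derangements V)
    (C : (edgeGraph (permEdges σ)).ConnectedComponent) :
    Nat.card C.supp = #(componentCycle σ C).support := by
  rw [← coe_support_componentCycle hσ, Nat.card_coe_set_eq, Set.ncard_coe_finset]

theorem evenCompCount_permEdges (hσ : σ ∈ derangements V) :
    evenCompCount (permEdges σ) = #{c ∈ σ.cycleFactorsFinset | Even #c.support} := by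
  classical
  rw [evenCompCount, Nat.card_eq_fintype_card, Fintype.card_subtype]
  refine card_nbij (componentCycle σ) ?_ ?_ ?_
  · intro C hC
    have hcycle : componentCycle σ C ∈ σ.cycleFactorsFinset := by
      induction C using ConnectedComponent.ind with | _ v =>
      exact cycleOf_mem_cycleFactorsFinset_iff.2 (mem_support.2 (hσ v))
    rw [mem_coe, mem_filter, ← card_supp_eq_card_support_componentCycle hσ]
    exact ⟨hcycle, (mem_filter.1 hC).2⟩
  · exact (componentCycle_injective hσ).injOn
  · intro c hc
    obtain ⟨hc, heven⟩ := mem_filter.1 hc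
    obtain ⟨v, hv⟩ := (mem_cycleFactorsFinset_iff.1 hc).1.nonempty_support
    have hcv : c = componentCycle σ (connectedComponentMk _ v) := cycle_is_cycleOf hv hc
    refine ⟨connectedComponentMk _ v, mem_coe.2 (mem_filter.2 ⟨mem_univ _, ?_⟩), hcv.symm⟩
    rw [card_supp_eq_card_support_componentCycle hσ, ← hcv]
    exact heven

end Sign

section Fiber

theorem apply_eq_or_eq_symm_apply (h : permEdges τ = permEdges σ) (v : V) :
    τ v = σ v ∨ τ v = σ.symm v := by
  have hv : s(v, τ v) ∈ permEdges σ := h ▸ mk_apply_mem_permEdges τ v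
  simpa only [mem_permEdges, Equiv.eq_symm_apply, eq_comm] using hv

theorem apply_apply_eq_of_permEdges_eq (h : permEdges τ = permEdges σ) (hv : τ v = σ v) :
    τ (σ v) = σ (σ v) := by
  rcases apply_eq_or_eq_symm_apply h (σ v) with hτ | hτ
  · exact hτ
  · rcases apply_eq_or_eq_symm_apply h.symm (σ v) with hσ | hσ
    · exact hσ.symm
    · rw [hτ, hσ, σ.symm_apply_apply, ← hv, τ.symm_apply_apply]

theorem apply_eq_of_sameCycle (h : permEdges τ = permEdges σ) (huv : σ.SameCycle u v)
    (hu : τ u = σ u) : τ v = σ v := by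
  obtain ⟨n, rfl⟩ := huv.exists_nat_pow_eq
  induction n with
  | zero => exact hu
  | succ n ih =>
    rw [pow_succ', Perm.mul_apply]
    exact apply_apply_eq_of_permEdges_eq h (ih ⟨n, rfl⟩)

theorem permEdges_reverseOn (s : Set V) [DecidablePred (· ∈ s)] (hs : ∀ v, σ v ∈ s ↔ v ∈ s) :
    permEdges (reverseOn σ s hs) = permEdges σ := by
  ext e
  induction e with | _ u v =>
  have hmem (h : σ u = v ∨ σ v = u) : u ∈ s ↔ v ∈ s := by grind
  simp only [mem_permEdges, reverseOn, Equiv.coe_fn_mk]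
  grind [Equiv.symm_apply_eq]

theorem apply_mem_cycleComponents_iff (T : Set (CycleComponent (permEdges σ))) (v : V) :
    (∃ C ∈ T, σ v ∈ C.1.supp) ↔ ∃ C ∈ T, v ∈ C.1.supp := by
  have hv : (edgeGraph (permEdges σ)).connectedComponentMk (σ v) = connectedComponentMk _ v :=
    ConnectedComponent.sound (reachable_apply σ v).symm
  simp only [ConnectedComponent.mem_supp_iff, hv]

open scoped Classical in
/-- The permutation obtained from `σ` by reversing the direction of travel along each of the cycle
components in `T`. -/
noncomputable def reverseCycles (σ : Perm V) (T : Set (CycleComponent (permEdges σ))) : Perm V :=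
  reverseOn σ {v | ∃ C ∈ T, v ∈ C.1.supp} (apply_mem_cycleComponents_iff T)

theorem reverseCycles_apply_of_mem {T : Set (CycleComponent (permEdges σ))}
    {C : CycleComponent (permEdges σ)} (hC : C ∈ T) (hv : v ∈ C.1.supp) :
    reverseCycles σ T v = σ.symm v :=
  if_pos ⟨C, hC, hv⟩

theorem reverseCycles_apply_of_notMem {T : Set (CycleComponent (permEdges σ))}
    (hv : ∀ C ∈ T, v ∉ C.1.supp) : reverseCycles σ T v = σ v :=
  if_neg fun ⟨C, hC, hvC⟩ => hv C hC hvC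

theorem reverseCycles_apply_eq_iff {T : Set (CycleComponent (permEdges σ))}
    {C : CycleComponent (permEdges σ)} (hv : v ∈ C.1.supp) : reverseCycles σ T v = σ v ↔ C ∉ T := by
  have hne : σ.symm v ≠ σ v := by
    intro h
    have hdeg := C.2 v hv
    rw [edgeDeg_permEdges, if_pos ((symm_apply_eq σ).1 h).symm] at hdeg
    lia
  by_cases hC : C ∈ T
  · simp only [reverseCycles_apply_of_mem hC hv, hne, hC, not_true_eq_false]
  · have hdisj : ∀ D ∈ T, v ∉ D.1.supp := fun D hD hvD =>
      hC (Subtype.ext (hvD.symm.trans hv) ▸ hD)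
    simp only [reverseCycles_apply_of_notMem hdisj, hC, not_false_eq_true]

theorem reverseCycles_injective (σ : Perm V) : Function.Injective (reverseCycles σ) := by
  intro T T' h
  ext C
  obtain ⟨v, hv⟩ := C.1.exists_rep
  rw [← not_iff_not, ← reverseCycles_apply_eq_iff hv, h, reverseCycles_apply_eq_iff hv]

theorem exists_reverseCycles_eq (h : permEdges τ = permEdges σ) :
    ∃ T, reverseCycles σ T = τ := by
  let T : Set (CycleComponent (permEdges σ)) := {C | ∃ u ∈ C.1.supp, τ u ≠ σ u}
  refine ⟨T, ?_⟩
  ext v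
  by_cases hv : ∃ C ∈ T, v ∈ C.1.supp
  · obtain ⟨C, hC, hv⟩ := hv
    have ⟨u, hu, hne⟩ := hC
    have hvu : σ.SameCycle v u := connectedComponentMk_permEdges_eq_iff.1 (hv.trans hu.symm)
    rw [reverseCycles_apply_of_mem hC hv]
    exact ((apply_eq_or_eq_symm_apply h v).resolve_left fun hτ =>
      hne (apply_eq_of_sameCycle h hvu hτ)).symm
  · rw [reverseCycles_apply_of_notMem fun C hC hvC => hv ⟨C, hC, hvC⟩]
    by_contra hne
    refine hv ⟨⟨connectedComponentMk _ v, fun u hu => ?_⟩, ⟨v, rfl, Ne.symm hne⟩, rfl⟩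
    rw [edgeDeg_permEdges, if_neg]
    intro hσu
    have hτu : τ u = σ u := (apply_eq_or_eq_symm_apply h u).elim id fun hτ =>
      hτ.trans ((symm_apply_eq σ).2 hσu.symm)
    exact hne (apply_eq_of_sameCycle h (connectedComponentMk_permEdges_eq_iff.1 hu) hτu).symm

theorem card_permEdges_fiber (σ : Perm V) :
    #{τ | permEdges τ = permEdges σ} = 2 ^ cycleCompCount (permEdges σ) := by
  classical
  have hfiber : ({τ | permEdges τ = permEdges σ} : Finset (Perm V)) =
      univ.image (reverseCycles σ) := by
    ext τ
    simp only [mem_filter, mem_univ, true_and, mem_image]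
    refine ⟨exists_reverseCycles_eq, ?_⟩
    rintro ⟨T, rfl⟩
    exact permEdges_reverseOn _ _
  rw [hfiber, card_image_of_injective _ (reverseCycles_injective σ), card_univ, Fintype.card_set,
    cycleCompCount, Nat.card_eq_fintype_card]

end Fiber

section Determinant

variable {R : Type*} [CommRing R]

theorem sum_fiber_sign_mul_prod (w : Sym2 V → R) (hΓ : IsSesquivalent Γ) :
    ∑ σ with permEdges σ = Γ, ((sign σ : ℤ) : R) * ∏ v, w s(v, σ v) =
      (-1) ^ evenCompCount Γ * 2 ^ cycleCompCount Γ *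
        (∏ e ∈ matchingEdges Γ, w e ^ 2) * ∏ e ∈ cycleEdges Γ, w e := by
  have hterm (σ : Perm V) (hσ : permEdges σ = Γ) : ((sign σ : ℤ) : R) * ∏ v, w s(v, σ v) =
      (-1) ^ evenCompCount Γ *
        ((∏ e ∈ matchingEdges Γ, w e ^ 2) * ∏ e ∈ cycleEdges Γ, w e) := by
    subst hσ
    rw [prod_mk_apply w hΓ.mem_derangements, sign_eq_neg_one_pow_card_even_cycles,
      ← evenCompCount_permEdges hΓ.mem_derangements]
    push_cast
    rfl
  rw [sum_congr rfl fun σ hσ => hterm σ (mem_filter.1 hσ).2, sum_const]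
  obtain ⟨σ, rfl⟩ := hΓ.exists_permEdges_eq
  rw [card_permEdges_fiber, nsmul_eq_mul]
  push_cast
  ring

theorem isSesquivalent_of_prod_ne_zero {w : Sym2 V → R} (hw : ∀ v, w s(v, v) = 0)
    (hσ : ∏ v, w s(v, σ v) ≠ 0) :
    IsSesquivalent (permEdges σ) ∧ ∀ e ∈ permEdges σ, w e ≠ 0 := by
  have hne (v : V) : w s(v, σ v) ≠ 0 := fun h => hσ (prod_eq_zero (mem_univ v) h)
  refine ⟨isSesquivalent_permEdges fun v hv => hne v (by rw [hv, hw]), ?_⟩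
  simpa [permEdges] using hne

theorem det_eq_sum_sesquivalent_spanning_general (A : Matrix V V R)
    (hdiag : ∀ v, A v v = 0) (w : Sym2 V → R) (hw : ∀ u v, w s(u, v) = A u v) :
    A.det = ∑ᶠ Γ ∈ {Γ : Finset (Sym2 V) | IsSesquivalent Γ ∧ ∀ e ∈ Γ, w e ≠ 0},
      (-1 : R) ^ evenCompCount Γ * 2 ^ cycleCompCount Γ *
        (∏ e ∈ matchingEdges Γ, w e ^ 2) * ∏ e ∈ cycleEdges Γ, w e := by
  classical
  calc A.det
    _ = ∑ σ : Perm V, ((sign σ : ℤ) : R) * ∏ v, w s(v, σ v) := by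
      rw [← Matrix.det_transpose, Matrix.det_apply']
      simp [hw]
    _ = ∑ Γ, ∑ σ with permEdges σ = Γ, ((sign σ : ℤ) : R) * ∏ v, w s(v, σ v) :=
      (sum_fiberwise _ _ _).symm
    _ = _ := by
      rw [finsum_eq_sum_of_fintype]
      refine sum_congr rfl fun Γ _ => ?_
      rw [finsum_eq_if]
      split_ifs with hΓ
      · exact sum_fiber_sign_mul_prod w hΓ.1
      · refine sum_eq_zero fun σ hσ => ?_
        obtain rfl := (mem_filter.1 hσ).2
        by_contra hne
        exact hΓ (isSesquivalent_of_prod_ne_zero (fun v => (hw v v).trans (hdiag v))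
          (right_ne_zero_of_mul hne))

end Determinant

end Sesquivalent

/-- **Corollary 1** (Harary's formula for weighted graphs).  Let `G` be a weighted graph
on a finite vertex set `V`, with weighted adjacency matrix `A` (symmetric, zero diagonal)
and edge-weight function `w` (so `w s(u,v) = A u v`).  Then
`det A = ∑_{Γ ∈ S(G)} (-1)^{sg(Γ)} 2^{c(Γ)} ∏_{e ∈ P²(Γ)} w(e)² ∏_{e ∈ C(Γ)} w(e)`,
the sum running over all sesquivalent spanning subgraphs of `G`. -/
theorem det_eq_sum_sesquivalent_spanning {V : Type*} [Fintype V] [DecidableEq V]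
    (A : Matrix V V ℝ)
    (hsym : ∀ u v : V, A u v = A v u) (hdiag : ∀ v : V, A v v = 0)
    (w : Sym2 V → ℝ) (hw : ∀ u v : V, w s(u, v) = A u v) :
    A.det = ∑ᶠ Γ ∈ {Γ : Finset (Sym2 V) | IsSesqSpanning w Γ},
      (-1 : ℝ) ^ evenCompCount Γ * 2 ^ cycleCompCount Γ *
        (∏ e ∈ matchingEdges Γ, (w e) ^ 2) * (∏ e ∈ cycleEdges Γ, w e) := by
  simpa only [isSesqSpanning_iff] using det_eq_sum_sesquivalent_spanning_general A hdiag w hw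
end

section
/- Let $n \geq 3$ and let $C_n = v_1 v_2 \dots v_n v_1$ be a weighted cycle with weighted adjacency matrix $A$. Set $E_1(C_n) = \{v_{i-1}v_i : 2 \mid i,\ i \leq n\}$ and $E_2(C_n) = E(C_n) \setminus E_1(C_n)$. Then: (i) if $n$ is odd, $\det A = 2 \prod_{e \in E(C_n)} w(e)$; (ii) if $n \equiv 2 \pmod 4$, $\det A = -\left[\prod_{e \in E_1(C_n)} w(e) + \prod_{e \in E_2(C_n)} w(e)\right]^2$; (iii) if $4 \mid n$, $\det A = \left[\prod_{e \in E_1(C_n)} w(e) - \prod_{e \in E_2(C_n)} w(e)\right]^2$. -/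
/-!
Let `A` be the adjacency matrix of the cycle `i ↦ σ i` with weights `w`. Row `σ i` of `A` is
supported on the columns `i` and `σ² i`, so permuting the rows by `σ` turns `A` into the matrix `B`
with `w i` in position `(i, i)` and `w (σ i)` in position `(i, σ² i)`. Only permutations that agree
on each cycle of `σ²` with either the identity or `σ²` contribute to `det B`. When `n` is odd,
`σ²` is a single cycle of odd length, hence an even permutation, and the two terms both equal `∏ w`.
When `n` is even, `σ²` is a cycle on each of the two colour classes, and `det B` is a product of two
binomials in `∏_{E₁} w` and `∏_{E₂} w` that agree up to sign.
-/

open Equiv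

variable {ι R : Type*}

section Permutations

lemma eq_one_or_eq_of_isCycleOn_univ {σ τ : Perm ι} (hσ : σ.IsCycleOn Set.univ)
    (hτ : ∀ i, τ i = i ∨ τ i = σ i) : τ = 1 ∨ τ = σ := by
  by_cases h : ∃ i, τ i ≠ i
  · obtain ⟨i, hi⟩ := h
    have hmoved (j : ι) : τ (σ j) ≠ σ j ↔ τ j ≠ j := by
      refine not_congr ⟨fun hfix => ?_, fun hfix => ?_⟩
      · rcases hτ j with hj | hj
        · exact hj
        · rwa [τ.injective (hfix.trans hj.symm)] at hfix
      · obtain ⟨k, hk⟩ := τ.surjective (σ j)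
        rcases hτ k with hk' | hk'
        · rwa [← hk, hk']
        · obtain rfl : k = j := σ.injective (hk'.symm.trans hk)
          rw [← hk, hfix, hfix]
    have hbij : Set.BijOn σ {j | τ j ≠ j} {j | τ j ≠ j} := σ.bijOn hmoved
    right
    ext j
    obtain ⟨m, rfl⟩ := hσ.2 (Set.mem_univ i) (Set.mem_univ j)
    exact (hτ _).resolve_left ((hbij.perm_zpow m).mapsTo hi)
  · left
    ext i
    simpa using not_exists.1 h i

lemma sign_of_isCycleOn_univ [Fintype ι] [DecidableEq ι] [Nonempty ι] {σ : Perm ι}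
    (hσ : σ.IsCycleOn Set.univ) : Perm.sign σ = -(-1) ^ Fintype.card ι := by
  rcases subsingleton_or_nontrivial ι with _ | _
  · let _ : Unique ι := uniqueOfSubsingleton (Classical.arbitrary ι)
    simp [Subsingleton.elim σ 1]
  · have hne (i : ι) : σ i ≠ i := hσ.apply_ne Set.nontrivial_univ (Set.mem_univ i)
    have hcycle : σ.IsCycle :=
      Perm.isCycle_iff_exists_isCycleOn.2 ⟨_, Set.nontrivial_univ, hσ, fun i _ => Set.mem_univ i⟩
    have hsupp : σ.support = Finset.univ := by ext i; simp [hne]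
    rw [hcycle.sign, hsupp, Finset.card_univ]

lemma isCycleOn_univ_sq_of_odd_card [Fintype ι] {σ : Perm ι} (hσ : σ.IsCycleOn Set.univ)
    (hodd : Odd (Fintype.card ι)) : (σ ^ 2).IsCycleOn Set.univ := by
  refine ⟨(σ ^ 2).bijOn (by simp), fun x _ y _ => ?_⟩
  have hfin : σ.IsCycleOn (Finset.univ : Finset ι) := by simpa using hσ
  obtain ⟨m, -, rfl⟩ := hfin.exists_pow_eq (Finset.mem_univ x) (Finset.mem_univ y)
  have hperiod : (σ ^ (m + Fintype.card ι)) x = (σ ^ m) x := by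
    rw [pow_add, Perm.mul_apply, ← Finset.card_univ, hfin.pow_card_apply (Finset.mem_univ x)]
  obtain ⟨l, hl⟩ : ∃ l, (σ ^ (2 * l)) x = (σ ^ m) x := by
    rcases m.even_or_odd with hm | hm
    · exact ⟨m / 2, by rw [Nat.two_mul_div_two_of_even hm]⟩
    · exact ⟨(m + Fintype.card ι) / 2, by
        rw [Nat.two_mul_div_two_of_even (hm.add_odd hodd), hperiod]⟩
  exact ⟨l, by rw [zpow_natCast, ← pow_mul, hl]⟩

lemma isCycleOn_sq_of_apply_iff_not {σ : Perm ι} (hσ : σ.IsCycleOn Set.univ) {p : ι → Prop}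
    (hp : ∀ i, p (σ i) ↔ ¬ p i) : (σ ^ 2).IsCycleOn {i | p i} := by
  have hsq (i : ι) : p ((σ ^ 2) i) ↔ p i := by rw [sq, Perm.mul_apply, hp, hp, not_not]
  refine ⟨(σ ^ 2).bijOn hsq, fun x hx y hy => ?_⟩
  obtain ⟨m, rfl⟩ := hσ.2 (Set.mem_univ x) (Set.mem_univ y)
  obtain ⟨l, rfl | rfl⟩ := m.even_or_odd'
  · exact ⟨l, by rw [zpow_mul, zpow_ofNat]⟩
  · have hbij : Set.BijOn ↑(σ ^ 2) {i | ¬ p i} {i | ¬ p i} :=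
      (σ ^ 2).bijOn fun i => not_congr (hsq i)
    have hmem : ¬ p (((σ ^ 2) ^ l) (σ x)) := (hbij.perm_zpow l).mapsTo (by simpa [hp] using hx)
    exact absurd hy (by simpa [zpow_add, zpow_mul] using hmem)

lemma prod_filter_comp_of_apply_iff_not [Fintype ι] [CommMonoid R] {σ : Perm ι} {p : ι → Prop}
    [DecidablePred p] (hp : ∀ i, p (σ i) ↔ ¬ p i) (f : ι → R) :
    ∏ i with p i, f (σ i) = ∏ i with ¬ p i, f i :=
  Finset.prod_equiv σ (by simp [hp]) fun _ _ => rfl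

lemma two_mul_card_of_apply_iff_not [Fintype ι] {σ : Perm ι} {p : ι → Prop}
    [DecidablePred p] (hp : ∀ i, p (σ i) ↔ ¬ p i) :
    2 * Fintype.card {i // p i} = Fintype.card ι := by
  have hcard : Fintype.card {i // p i} = Fintype.card {i // ¬ p i} :=
    Fintype.card_congr (σ.subtypeEquiv fun i => by simp [hp])
  rw [Fintype.card_subtype_compl] at hcard
  have := Fintype.card_subtype_le p
  lia

end Permutations

section PermBidiagonal

variable [DecidableEq ι] [CommRing R]

/-- The matrix carrying `a` on the diagonal and `b i` in position `(i, σ i)`; a cyclic bidiagonal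
matrix when `σ` is a cyclic shift. The entries add up at the fixed points of `σ`. -/
def permBidiagonal (σ : Perm ι) (a b : ι → R) : Matrix ι ι R :=
  .of fun i j => (if i = j then a i else 0) + if σ i = j then b i else 0

lemma permBidiagonal_apply (σ : Perm ι) (a b : ι → R) (i j : ι) :
    permBidiagonal σ a b i j = (if i = j then a i else 0) + if σ i = j then b i else 0 :=
  rfl

lemma toSquareBlockProp_permBidiagonal {σ : Perm ι} {p : ι → Prop} (hp : ∀ i, p (σ i) ↔ p i)
    (a b : ι → R) :
    (permBidiagonal σ a b).toSquareBlockProp p =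
      permBidiagonal (σ.subtypePerm hp) (fun i => a i) fun i => b i := by
  ext i j
  simp [Matrix.toSquareBlockProp_def, permBidiagonal_apply, Subtype.ext_iff]

variable [Fintype ι]

lemma det_permBidiagonal_of_isCycleOn_univ [Nonempty ι] {σ : Perm ι}
    (hσ : σ.IsCycleOn Set.univ) (a b : ι → R) :
    (permBidiagonal σ a b).det = ∏ i, a i - (-1) ^ Fintype.card ι * ∏ i, b i := by
  rcases subsingleton_or_nontrivial ι with _ | _
  · let _ : Unique ι := uniqueOfSubsingleton (Classical.arbitrary ι)
    simp [Matrix.det_unique, permBidiagonal_apply, Subsingleton.elim σ 1]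
  have hne (i : ι) : σ i ≠ i := hσ.apply_ne Set.nontrivial_univ (Set.mem_univ i)
  have hσ1 : 1 ≠ σ := fun h => hne (Classical.arbitrary ι) (by simp [← h])
  have hvanish (τ : Perm ι) (hτ : τ ≠ 1 ∧ τ ≠ σ) :
      Perm.sign τ • ∏ i, permBidiagonal σ a b i (τ i) = 0 := by
    obtain ⟨i, hi⟩ : ∃ i, ¬ (τ i = i ∨ τ i = σ i) := by
      by_contra! h
      exact (eq_one_or_eq_of_isCycleOn_univ hσ h).elim hτ.1 hτ.2
    rw [not_or] at hi
    have hzero : permBidiagonal σ a b i (τ i) = 0 := by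
      simp [permBidiagonal_apply, Ne.symm hi.1, Ne.symm hi.2]
    rw [Finset.prod_eq_zero (Finset.mem_univ i) hzero, smul_zero]
  calc
    _ = ∑ τ : Perm ι, Perm.sign τ • ∏ i, permBidiagonal σ a b i (τ i) := by
      rw [← Matrix.det_transpose, Matrix.det_apply]; rfl
    _ = ∏ i, a i + Perm.sign σ • ∏ i, b i := by
      rw [Fintype.sum_eq_add 1 σ hσ1 hvanish]
      simp [permBidiagonal_apply, hne, fun i => (hne i).symm]
    _ = _ := by
      rw [sign_of_isCycleOn_univ hσ]
      simp [Units.smul_def, sub_eq_add_neg]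

lemma det_toSquareBlockProp_permBidiagonal {σ : Perm ι} {p : ι → Prop} [DecidablePred p]
    [Nonempty {i // p i}] (hσ : σ.IsCycleOn {i | p i}) (a b : ι → R) :
    ((permBidiagonal σ a b).toSquareBlockProp p).det =
      ∏ i with p i, a i - (-1) ^ Fintype.card {i // p i} * ∏ i with p i, b i := by
  have hinv (i : ι) : p (σ i) ↔ p i := hσ.apply_mem_iff
  have hcycle : (σ.subtypePerm hinv).IsCycleOn Set.univ := hσ.subtypePerm
  rw [toSquareBlockProp_permBidiagonal hinv, det_permBidiagonal_of_isCycleOn_univ hcycle]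
  simp_rw [← Finset.prod_subtype_eq_prod_filter, Finset.subtype_univ]

lemma det_permBidiagonal_of_isCycleOn_of_isCycleOn_not {σ : Perm ι} {p : ι → Prop}
    [DecidablePred p] [Nonempty {i // p i}] [Nonempty {i // ¬ p i}]
    (hp : σ.IsCycleOn {i | p i}) (hnp : σ.IsCycleOn {i | ¬ p i}) (a b : ι → R) :
    (permBidiagonal σ a b).det =
      (∏ i with p i, a i - (-1) ^ Fintype.card {i // p i} * ∏ i with p i, b i) *
      (∏ i with ¬ p i, a i - (-1) ^ Fintype.card {i // ¬ p i} * ∏ i with ¬ p i, b i) := by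
  have hblock (i : ι) (hi : ¬ p i) (j : ι) (hj : p j) : permBidiagonal σ a b i j = 0 := by
    have hij : i ≠ j := by rintro rfl; exact hi hj
    have hσij : σ i ≠ j := by rintro rfl; exact hi (hp.apply_mem_iff.1 hj)
    simp [permBidiagonal_apply, hij, hσij]
  rw [Matrix.twoBlockTriangular_det _ p hblock, det_toSquareBlockProp_permBidiagonal hp,
    det_toSquareBlockProp_permBidiagonal hnp]

end PermBidiagonal

section CycleAdjMatrix

variable [DecidableEq ι] [CommRing R]

/-- The weighted adjacency matrix of the graph with an edge of weight `w i` from `i` to `σ i` for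
every `i`, which is a weighted cycle when `σ` is a cyclic permutation of at least three vertices.
The two orientations of an edge are added up, so that a fixed point of `σ` contributes `2 * w i`,
and a 2-cycle behaves as a pair of parallel edges. -/
def cycleAdjMatrix (σ : Perm ι) (w : ι → R) : Matrix ι ι R :=
  .of fun i j => (if σ i = j then w i else 0) + if σ j = i then w j else 0

lemma cycleAdjMatrix_apply (σ : Perm ι) (w : ι → R) (i j : ι) :
    cycleAdjMatrix σ w i j = (if σ i = j then w i else 0) + if σ j = i then w j else 0 :=
  rfl

lemma cycleAdjMatrix_submatrix (σ : Perm ι) (w : ι → R) :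
    (cycleAdjMatrix σ w).submatrix σ id = permBidiagonal (σ ^ 2) w (w ∘ σ) := by
  ext i j
  by_cases h : i = j <;> simp [cycleAdjMatrix_apply, permBidiagonal_apply, sq, add_comm, h, eq_comm]

variable [Fintype ι]

lemma sign_mul_det_cycleAdjMatrix (σ : Perm ι) (w : ι → R) :
    (Perm.sign σ : R) * (cycleAdjMatrix σ w).det = (permBidiagonal (σ ^ 2) w (w ∘ σ)).det := by
  rw [← cycleAdjMatrix_submatrix, Matrix.det_permute]

lemma det_cycleAdjMatrix_of_odd_card {σ : Perm ι} (hσ : σ.IsCycleOn Set.univ)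
    (hodd : Odd (Fintype.card ι)) (w : ι → R) : (cycleAdjMatrix σ w).det = 2 * ∏ i, w i := by
  have : Nonempty ι := Fintype.card_pos_iff.1 hodd.pos
  have hdet := sign_mul_det_cycleAdjMatrix σ w
  rw [det_permBidiagonal_of_isCycleOn_univ (isCycleOn_univ_sq_of_odd_card hσ hodd),
    sign_of_isCycleOn_univ hσ, hodd.neg_one_pow, hodd.neg_one_pow] at hdet
  simpa [Equiv.prod_comp σ w, two_mul] using hdet

lemma det_cycleAdjMatrix_of_apply_iff_not [Nonempty ι] {σ : Perm ι} (hσ : σ.IsCycleOn Set.univ)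
    {p : ι → Prop} [DecidablePred p] (hp : ∀ i, p (σ i) ↔ ¬ p i) (w : ι → R) :
    (cycleAdjMatrix σ w).det = (-1) ^ (Fintype.card ι / 2) *
      (∏ i with p i, w i - (-1) ^ (Fintype.card ι / 2) * ∏ i with ¬ p i, w i) ^ 2 := by
  have hnp (i : ι) : ¬ p (σ i) ↔ ¬ ¬ p i := not_congr (hp i)
  have hcard := two_mul_card_of_apply_iff_not hp
  have hncard := two_mul_card_of_apply_iff_not (p := fun i => ¬ p i) hnp
  have hpos : 0 < Fintype.card ι := Fintype.card_pos
  have : Nonempty {i // p i} := Fintype.card_pos_iff.1 (by lia)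
  have : Nonempty {i // ¬ p i} := Fintype.card_pos_iff.1 (by lia)
  have hprod : ∏ i with ¬ p i, w (σ i) = ∏ i with p i, w i := by
    simpa using prod_filter_comp_of_apply_iff_not (p := fun i => ¬ p i) hnp w
  set ε : R := (-1) ^ (Fintype.card ι / 2) with hε
  have hε_sq : ε ^ 2 = 1 := by rw [hε, pow_right_comm, neg_one_sq, one_pow]
  have hsign : Perm.sign σ = -1 := by
    rw [sign_of_isCycleOn_univ hσ, (even_iff_exists_two_mul.2 ⟨_, hcard.symm⟩).neg_one_pow]
  have hdet : -(cycleAdjMatrix σ w).det =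
      (∏ i with p i, w i - ε * ∏ i with ¬ p i, w i) *
      (∏ i with ¬ p i, w i - ε * ∏ i with p i, w i) := by
    have h := sign_mul_det_cycleAdjMatrix σ w
    rw [det_permBidiagonal_of_isCycleOn_of_isCycleOn_not (isCycleOn_sq_of_apply_iff_not hσ hp)
      (isCycleOn_sq_of_apply_iff_not hσ hnp),
      show Fintype.card {i // p i} = Fintype.card ι / 2 by lia,
      show Fintype.card {i // ¬ p i} = Fintype.card ι / 2 by lia] at h
    simpa [hsign, prod_filter_comp_of_apply_iff_not hp, hprod] using h
  linear_combination -hdet + ((∏ i with p i, w i) * (∏ i with ¬ p i, w i) -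
    ε * (∏ i with ¬ p i, w i) ^ 2) * hε_sq

end CycleAdjMatrix

section FinRotate

lemma val_finRotate {n : ℕ} (i : Fin n) : (finRotate n i : ℕ) = (i + 1) % n := by
  have := i.neZero
  rw [finRotate_apply, Fin.val_add, Fin.val_one', Nat.add_mod_mod]

lemma isCycleOn_univ_finRotate (n : ℕ) : (finRotate n).IsCycleOn Set.univ := by
  rcases Nat.lt_or_ge n 2 with hn | hn
  · have : Subsingleton (Fin n) := Fin.subsingleton_iff_le_one.2 (by lia)
    exact Perm.isCycleOn_of_subsingleton _ _
  · have hmoved : {i | finRotate n i ≠ i} = Set.univ := by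
      rw [← Perm.coe_support_eq_set_support, support_finRotate_of_le hn, Finset.coe_univ]
    exact hmoved ▸ (isCycle_finRotate_of_le hn).isCycleOn

lemma even_finRotate_iff {n : ℕ} (hn : Even n) (i : Fin n) :
    Even (finRotate n i : ℕ) ↔ ¬ Even (i : ℕ) := by
  rw [val_finRotate, Nat.even_iff, Nat.mod_mod_of_dvd _ hn.two_dvd, ← Nat.even_iff,
    Nat.even_add_one]

lemma cycleAdjMatrix_finRotate_apply [CommRing R] {n : ℕ} (hn : 3 ≤ n) (w : ℕ → R) (i j : Fin n) :
    cycleAdjMatrix (finRotate n) (fun k => w k) i j =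
      if ((i : ℕ) + 1) % n = j then w i else if ((j : ℕ) + 1) % n = i then w j else 0 := by
  have hnot_back (hij : ((i : ℕ) + 1) % n = j) : ((j : ℕ) + 1) % n ≠ i := by
    intro hji
    rw [← hij, Nat.mod_add_mod] at hji
    rcases Nat.lt_or_ge (i + 1 + 1) n with h | h
    · rw [Nat.mod_eq_of_lt h] at hji
      lia
    · rw [Nat.mod_eq_sub_mod h, Nat.mod_eq_of_lt (by lia)] at hji
      lia
  simp only [cycleAdjMatrix_apply, Fin.ext_iff, val_finRotate]
  split_ifs <;> simp_all

lemma prod_fin_filter_eq_prod_range_filter [CommMonoid R] (n : ℕ) (p : ℕ → Prop) [DecidablePred p]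
    (w : ℕ → R) : ∏ i with p (i : Fin n), w i = ∏ k ∈ Finset.range n with p k, w k := by
  rw [Finset.prod_filter, Finset.prod_filter, Finset.prod_range]

lemma filter_even_range_sub_one {n : ℕ} (hn : Even n) :
    (Finset.range (n - 1)).filter Even = (Finset.range n).filter Even := by
  ext k
  simp only [Finset.mem_filter, Finset.mem_range]
  grind

lemma det_cycleAdjMatrix_finRotate_of_even [CommRing R] {n : ℕ} [NeZero n] (hn : Even n)
    (w : ℕ → R) :
    (cycleAdjMatrix (finRotate n) fun k => w k).det = (-1) ^ (n / 2) *
      (∏ k ∈ Finset.range (n - 1) with Even k, w k - (-1) ^ (n / 2) *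
        ∏ k ∈ Finset.range n \ (Finset.range (n - 1)).filter Even, w k) ^ 2 := by
  rw [det_cycleAdjMatrix_of_apply_iff_not (p := fun i => Even (i : ℕ))
      (isCycleOn_univ_finRotate n) (even_finRotate_iff hn), Fintype.card_fin,
    prod_fin_filter_eq_prod_range_filter n Even w,
    prod_fin_filter_eq_prod_range_filter n (fun k => ¬ Even k) w,
    filter_even_range_sub_one hn, ← Finset.filter_not]

end FinRotate

theorem det_weighted_cycle_general [CommRing R] (n : ℕ) (hn : 3 ≤ n) (w : ℕ → R)
    (A : Matrix (Fin n) (Fin n) R)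
    (hA : ∀ i j : Fin n,
      A i j = if ((i : ℕ) + 1) % n = (j : ℕ) then w i
              else if ((j : ℕ) + 1) % n = (i : ℕ) then w j else 0) :
    (Odd n → A.det = 2 * ∏ k ∈ Finset.range n, w k) ∧
    (n % 4 = 2 → A.det =
      -((∏ k ∈ (Finset.range (n - 1)).filter (fun k => Even k), w k) +
        (∏ k ∈ Finset.range n \ (Finset.range (n - 1)).filter (fun k => Even k), w k)) ^ 2) ∧
    (n % 4 = 0 → A.det =
      ((∏ k ∈ (Finset.range (n - 1)).filter (fun k => Even k), w k) -
       (∏ k ∈ Finset.range n \ (Finset.range (n - 1)).filter (fun k => Even k), w k)) ^ 2) := by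
  have hn0 : NeZero n := ⟨by lia⟩
  obtain rfl : A = cycleAdjMatrix (finRotate n) fun k => w k := by
    ext i j
    rw [hA, cycleAdjMatrix_finRotate_apply hn]
  refine ⟨fun hodd => ?_, fun hmod => ?_, fun hmod => ?_⟩
  · rw [det_cycleAdjMatrix_of_odd_card (isCycleOn_univ_finRotate n) (by simpa using hodd),
      Finset.prod_range]
  · have heven : Even n := Nat.even_iff.2 (by lia)
    have hhalf : Odd (n / 2) := Nat.odd_iff.2 (by lia)
    rw [det_cycleAdjMatrix_finRotate_of_even heven, hhalf.neg_one_pow]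
    ring
  · have heven : Even n := Nat.even_iff.2 (by lia)
    have hhalf : Even (n / 2) := Nat.even_iff.2 (by lia)
    rw [det_cycleAdjMatrix_finRotate_of_even heven, hhalf.neg_one_pow]
    ring

/-- **Corollary 5** (determinant of a weighted cycle).  Let `n ≥ 3` and let
`Cₙ = v₁v₂…vₙv₁` be a weighted cycle: vertex `vᵢ` is position `i-1 : Fin n`, and for
each `k < n` the edge joining positions `k` and `(k+1) % n` carries the nonzero weight
`w k` (so `w (n-1)` is the weight of `vₙv₁`).  The weighted adjacency matrix `A` is the
symmetric matrix with zero diagonal whose only nonzero entries are these weights.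
With `E₁ = {v_{i-1}vᵢ : 2 ∣ i, i ≤ n}` (0-indexed: the even `k < n - 1`) and
`E₂ = E(Cₙ) \ E₁`:
(i) if `n` is odd then `det A = 2 ∏_{e ∈ E(Cₙ)} w e`;
(ii) if `n ≡ 2 (mod 4)` then `det A = -(∏_{E₁} w + ∏_{E₂} w)^2`;
(iii) if `4 ∣ n` then `det A = (∏_{E₁} w - ∏_{E₂} w)^2`. -/
theorem det_weighted_cycle (n : ℕ) (hn : 3 ≤ n)
    (w : ℕ → ℝ) (hw : ∀ k : ℕ, k < n → w k ≠ 0)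
    (A : Matrix (Fin n) (Fin n) ℝ)
    (hA : ∀ i j : Fin n,
      A i j = if ((i : ℕ) + 1) % n = (j : ℕ) then w i
              else if ((j : ℕ) + 1) % n = (i : ℕ) then w j else 0) :
    (Odd n → A.det = 2 * ∏ k ∈ Finset.range n, w k) ∧
    (n % 4 = 2 → A.det =
      -((∏ k ∈ (Finset.range (n - 1)).filter (fun k => Even k), w k) +
        (∏ k ∈ Finset.range n \ (Finset.range (n - 1)).filter (fun k => Even k), w k)) ^ 2) ∧
    (n % 4 = 0 → A.det =
      ((∏ k ∈ (Finset.range (n - 1)).filter (fun k => Even k), w k) -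
       (∏ k ∈ Finset.range n \ (Finset.range (n - 1)).filter (fun k => Even k), w k)) ^ 2) := by
  exact det_weighted_cycle_general n hn w A hA
end

section
/- Fix integers $n, m \geq 1$ and a natural number $x$. Let $A$ be the weighted adjacency matrix of the hexagonal grid $H_{n,m}$ in which the edge $v_{2i}^1 v_{2i+1}^1$ has weight $(x+i)/i$ for each $i \in \{1, \dots, n\}$ and every other edge has weight $1$. Then $\det A = (-1)^{nm+n+m} \binom{x+n+m}{n}^2$. -/
/-- A pair `p = (i, j)` is a vertex `vⱼⁱ` of the hexagonal grid `H_{n,m}`: either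
`1 ≤ i ≤ m` and `1 ≤ j ≤ 2n+2` (rows `1, …, m` are paths on `2n+2` vertices), or
`i = m+1` and `2 ≤ j ≤ 2n+1` (row `m+1` is a path on `2n` vertices). -/
def hexVertex (n m : ℕ) (p : ℕ × ℕ) : Prop :=
  (1 ≤ p.1 ∧ p.1 ≤ m ∧ 1 ≤ p.2 ∧ p.2 ≤ 2 * n + 2) ∨
  (p.1 = m + 1 ∧ 2 ≤ p.2 ∧ p.2 ≤ 2 * n + 1)

instance (n m : ℕ) : DecidablePred (hexVertex n m) := fun p => by
  unfold hexVertex; infer_instance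

/-- The vertex set of the hexagonal grid `H_{n,m}` as a finite set of pairs. -/
def hexVerts (n m : ℕ) : Finset (ℕ × ℕ) :=
  (Finset.range (m + 2) ×ˢ Finset.range (2 * n + 3)).filter (hexVertex n m)

/-- Adjacency in the hexagonal grid `H_{n,m}` (for pairs `(row, column)` belonging to
the vertex set): horizontal edges `vⱼⁱ v_{j+1}ⁱ` between consecutive columns of the same
row, and vertical edges `v₂^{i+1} v₁ⁱ` and `v_{2k+1}^{i+1} v_{2k+2}ⁱ` for `1 ≤ k ≤ n`. -/
def hexAdj (n : ℕ) (p q : ℕ × ℕ) : Prop :=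
  (p.1 = q.1 ∧ (p.2 + 1 = q.2 ∨ q.2 + 1 = p.2)) ∨
  (p.1 = q.1 + 1 ∧
    ((q.2 = 1 ∧ p.2 = 2) ∨ ∃ k, 1 ≤ k ∧ k ≤ n ∧ q.2 = 2 * k + 2 ∧ p.2 = 2 * k + 1)) ∨
  (q.1 = p.1 + 1 ∧
    ((p.2 = 1 ∧ q.2 = 2) ∨ ∃ k, 1 ≤ k ∧ k ≤ n ∧ p.2 = 2 * k + 2 ∧ q.2 = 2 * k + 1))

/-- The weight of an edge `{p, q}` of the weighted hexagonal grid of Theorem 2: the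
edge `v_{2i}¹ v_{2i+1}¹` (row 1, columns `2i` and `2i+1`) has weight `(x+i)/i` for
`1 ≤ i ≤ n`, and every other edge has weight `1`.  (When the first condition holds,
`min p.2 q.2 = 2i`, so `(min p.2 q.2)/2 = i`.) -/
noncomputable def hexWeight (n x : ℕ) (p q : ℕ × ℕ) : ℝ :=
  open scoped Classical in
  if ∃ i, 1 ≤ i ∧ i ≤ n ∧
      ((p = (1, 2 * i) ∧ q = (1, 2 * i + 1)) ∨ (q = (1, 2 * i) ∧ p = (1, 2 * i + 1)))
  then ((x : ℝ) + ((min p.2 q.2 / 2 : ℕ) : ℝ)) / ((min p.2 q.2 / 2 : ℕ) : ℝ)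
  else 1

/-- The weighted adjacency matrix of the hexagonal grid `H_{n,m}` with the weights (*)
of Theorem 2, indexed by its vertices. -/
noncomputable def hexWMatrix (n m x : ℕ) :
    Matrix {p // p ∈ hexVerts n m} {p // p ∈ hexVerts n m} ℝ :=
  open scoped Classical in
  fun p q => if hexAdj n p.1 q.1 then hexWeight n x p.1 q.1 else 0

/-!
Adding the two missing corners `v_{2n+2}^{m+1}` and `v_1^0` turns the hexagonal grid into a
bipartite graph whose biadjacency matrix `M` is the unitriangular path matrix of an
`(m + 1) × (n + 1)` rectangular grid. Deleting the two corners again leaves a determinant equal, up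
to sign, to the square of the entry of `adjugate M` indexed by them. As `det M = 1`, that entry is
an entry of the inverse of `M`, which is, up to sign, a sum over the lattice paths between opposite
corners of the rectangular grid. With weights `(x + k) / k` along the first row, these sums satisfy
Pascal's rule and equal binomial coefficients.
-/

namespace HexagonalGrid

open Matrix

section Bipartite

variable {ι R : Type*} [Fintype ι] [DecidableEq ι] [CommRing R]

theorem det_fromBlocks_antidiagonal (M N : Matrix ι ι R) :
    (fromBlocks 0 M N 0).det = (-1) ^ Fintype.card ι * (M.det * N.det) := by
  have factor : fromBlocks 0 M N 0 * fromBlocks 1 0 1 1 =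
      fromBlocks M 0 0 N * fromBlocks 1 1 1 0 := by
    simp only [fromBlocks_multiply, Matrix.mul_zero, Matrix.mul_one, zero_add, add_zero]
  have h := congrArg det factor
  simp only [det_mul, det_fromBlocks_zero₁₂, det_fromBlocks_one₁₁, det_one, mul_one,
    zero_sub, det_neg] at h
  rw [h, mul_comm]

theorem det_of_unitriangular {α : Type*} [LinearOrder α] (M : Matrix ι ι R) (rank : ι → α)
    (diag : ∀ i, M i i = 1) (lower : ∀ i j, i ≠ j → rank j ≤ rank i → M i j = 0) :
    M.det = 1 := by
  have triangular : M.BlockTriangular rank := fun i j hij =>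
    lower i j (fun h => hij.ne (congrArg rank h).symm) hij.le
  rw [triangular.det]
  refine Finset.prod_eq_one fun a _ => ?_
  have block_eq_one : M.toSquareBlock rank a = 1 := by
    ext ⟨i, hi⟩ ⟨j, hj⟩
    obtain rfl | hij := eq_or_ne i j
    · rw [one_apply_eq]
      exact diag i
    · rw [one_apply_ne (Subtype.coe_ne_coe.mp hij)]
      exact lower i j hij (hj.trans hi.symm).le
  rw [block_eq_one, det_one]

theorem adjugate_apply_of_vecMul_eq_single {M : Matrix ι ι R} {v : ι → R} {c : ι}
    (h : v ᵥ* M = Pi.single c 1) (r : ι) : M.adjugate c r = M.det * v r := by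
  calc M.adjugate c r = (Pi.single c 1 ᵥ* M.adjugate) r := by rw [single_one_vecMul, row]
    _ = M.det * v r := by
      rw [← h, vecMul_vecMul, mul_adjugate, vecMul_smul, vecMul_one, Pi.smul_apply, smul_eq_mul]

/-- The weighted adjacency matrix of the bipartite graph with biadjacency matrix `M`. -/
def bipartiteMatrix (M : Matrix ι ι R) : Matrix (ι ⊕ ι) (ι ⊕ ι) R :=
  fromBlocks 0 M Mᵀ 0

/-- The vertices deleted from a bipartite graph: the row vertex `r` and the column vertex `c`. -/
def IsDeleted (r c : ι) (v : ι ⊕ ι) : Prop :=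
  v = .inl r ∨ v = .inr c

instance (r c : ι) : DecidablePred (IsDeleted r c) := fun v =>
  inferInstanceAs (Decidable (v = .inl r ∨ v = .inr c))

theorem det_bipartiteMatrix_delete (M : Matrix ι ι R) (r c : ι) :
    ((bipartiteMatrix M).toSquareBlockProp (¬IsDeleted r c ·)).det =
      (-1) ^ (Fintype.card ι + 1) * M.adjugate c r ^ 2 := by
  let row : {v // IsDeleted r c v} := ⟨.inl r, .inl rfl⟩
  let column : {v // IsDeleted r c v} := ⟨.inr c, .inr rfl⟩
  have row_ne_column : row ≠ column := fun h => Sum.inl_ne_inr (congrArg Subtype.val h)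
  -- Unit vectors in the two deleted rows make `K` block triangular, one block being the minor.
  let K : Matrix (ι ⊕ ι) (ι ⊕ ι) R :=
    fromBlocks 0 (M.updateRow r (Pi.single c 1)) (Mᵀ.updateRow c (Pi.single r 1)) 0
  have det_K : K.det = (-1) ^ Fintype.card ι * M.adjugate c r ^ 2 := by
    rw [det_fromBlocks_antidiagonal, ← adjugate_apply, ← adjugate_apply, ← adjugate_transpose,
      transpose_apply, sq]
  have deleted_block : K.toSquareBlockProp (IsDeleted r c) =
      (Equiv.swap row column).permMatrix R := by
    ext v w
    obtain rfl | rfl : v = row ∨ v = column := v.2.imp Subtype.ext Subtype.ext <;>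
    obtain rfl | rfl : w = row ∨ w = column := w.2.imp Subtype.ext Subtype.ext <;>
      simp [K, row, column, toSquareBlockProp_def, PEquiv.toMatrix_apply, Subtype.ext_iff]
  have kept_block : K.toSquareBlockProp (¬IsDeleted r c ·) =
      (bipartiteMatrix M).toSquareBlockProp (¬IsDeleted r c ·) := by
    ext ⟨v | v, hv⟩ ⟨w | w, hw⟩
    · rfl
    · exact congrFun (updateRow_ne fun h => hv (.inl (congrArg _ h))) w
    · exact congrFun (updateRow_ne fun h => hv (.inr (congrArg _ h))) w
    · rfl
  have block_triangular : ∀ v, IsDeleted r c v → ∀ w, ¬IsDeleted r c w → K v w = 0 := by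
    rintro v (rfl | rfl) (w | w) hw <;> simp_all [K, IsDeleted]
  have split : K.det = -((bipartiteMatrix M).toSquareBlockProp (¬IsDeleted r c ·)).det := by
    rw [twoBlockTriangular_det' K (IsDeleted r c) block_triangular, deleted_block, kept_block,
      det_permutation, Equiv.Perm.sign_swap row_ne_column]
    simp
  linear_combination split - det_K

end Bipartite

section RectangularGrid

variable {R : Type*} [CommRing R]

/-- The path matrix of the `M × N` grid: the identity plus the weighted arcs into `q` from its
neighbour `(q.1 - 1, q.2)`, of weight `1`, and from `(q.1, q.2 - 1)`, of weight `w q.1 q.2`. -/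
def gridMatrix (w : ℕ → ℕ → R) (M N : ℕ) : Matrix (Fin M × Fin N) (Fin M × Fin N) R :=
  fun p q =>
    (if q.1.val = p.1 ∧ q.2.val = p.2 then 1 else 0) +
    (if q.1.val = p.1 + 1 ∧ q.2.val = p.2 then 1 else 0) +
    (if q.1.val = p.1 ∧ q.2.val = p.2 + 1 then w q.1 q.2 else 0)

/-- The total weight of the monotone lattice paths from `(0, 0)` to `(i, k)`, a path having the
product of its arc weights as weight; the arcs are those of `gridMatrix`. -/
def pathSum (w : ℕ → ℕ → R) : ℕ → ℕ → R
  | 0, 0 => 1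
  | 0, k + 1 => w 0 (k + 1) * pathSum w 0 k
  | i + 1, 0 => pathSum w i 0
  | i + 1, k + 1 => pathSum w i (k + 1) + w (i + 1) (k + 1) * pathSum w (i + 1) k

theorem det_gridMatrix (w : ℕ → ℕ → R) (M N : ℕ) : (gridMatrix w M N).det = 1 := by
  refine det_of_unitriangular _ (fun p => p.1.val + p.2.val) (fun p => by simp [gridMatrix]) ?_
  rintro p q hpq hrank
  have := mt Prod.ext_iff.mpr hpq
  simp only [Fin.ext_iff] at this
  simp only [gridMatrix]
  rw [if_neg (by omega), if_neg (by omega), if_neg (by omega), add_zero, add_zero]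

theorem sum_ite_val_eq_val {A : Type*} [AddCommMonoid A] {N : ℕ} (f : ℕ → A) (k : Fin N) :
    ∑ b : Fin N, (if k.val = b then f b else 0) = f k := by
  simp [← Fin.ext_iff]

theorem sum_ite_val_eq_val_add_one {A : Type*} [AddCommMonoid A] {N : ℕ} (f : ℕ → A) (k : Fin N) :
    ∑ b : Fin N, (if k.val = b + 1 then f b else 0) = if k.val = 0 then 0 else f (k - 1) := by
  rw [Fin.sum_univ_eq_sum_range fun b => if k.val = b + 1 then f b else 0]
  split_ifs with hk
  · simp [hk]
  · simp_rw [show ∀ b, k.val = b + 1 ↔ k.val - 1 = b by omega]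
    rw [Finset.sum_ite_eq, if_pos (Finset.mem_range.mpr (by omega))]

theorem vecMul_gridMatrix (w f : ℕ → ℕ → R) {M N : ℕ} (q : Fin M × Fin N) :
    ((fun p : Fin M × Fin N => f p.1 p.2) ᵥ* gridMatrix w M N) q =
      f q.1 q.2 + (if q.1.val = 0 then 0 else f (q.1 - 1) q.2) +
        (if q.2.val = 0 then 0 else f q.1 (q.2 - 1) * w q.1 q.2) := by
  simp only [vecMul, dotProduct, gridMatrix, mul_add, mul_ite, mul_one, mul_zero,
    Finset.sum_add_distrib, Fintype.sum_prod_type, ite_and, Finset.sum_ite_irrel,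
    Finset.sum_const_zero]
  rw [sum_ite_val_eq_val fun a => ∑ b : Fin N, if q.2.val = b then f a b else 0,
    sum_ite_val_eq_val_add_one fun a => ∑ b : Fin N, if q.2.val = b then f a b else 0,
    sum_ite_val_eq_val fun a => ∑ b : Fin N, if q.2.val = b + 1 then f a b * w q.1 q.2 else 0,
    sum_ite_val_eq_val (f _), sum_ite_val_eq_val (f _),
    sum_ite_val_eq_val_add_one fun b => f q.1 b * w q.1 q.2]

theorem vecMul_signedPathSum (w : ℕ → ℕ → R) (m n : ℕ) :
    (fun p => (-1) ^ (p.1.val + p.2.val) * pathSum w p.1 p.2) ᵥ* gridMatrix w (m + 1) (n + 1) =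
      Pi.single (0, 0) 1 := by
  ext ⟨⟨i, hi⟩, ⟨k, hk⟩⟩
  rw [vecMul_gridMatrix w fun i k => (-1) ^ (i + k) * pathSum w i k]
  rcases i with _ | i <;> rcases k with _ | k <;>
    simp only [pathSum, Pi.single_apply, Prod.ext_iff, Fin.ext_iff, Fin.val_zero,
      Nat.add_eq_zero_iff, one_ne_zero, and_true, and_false, if_true, if_false,
      Nat.add_sub_cancel] <;>
    ring

theorem adjugate_gridMatrix (w : ℕ → ℕ → R) (m n : ℕ) :
    (gridMatrix w (m + 1) (n + 1)).adjugate (0, 0) (Fin.last m, Fin.last n) =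
      (-1) ^ (m + n) * pathSum w m n := by
  simpa [det_gridMatrix] using
    adjugate_apply_of_vecMul_eq_single (vecMul_signedPathSum w m n) (Fin.last m, Fin.last n)

end RectangularGrid

/-- The arc weights for which `gridMatrix` is the biadjacency matrix of the completed hexagonal
grid. The value at `k = 0` is immaterial, since no arc `(i, k - 1) → (i, k)` exists there. -/
noncomputable def hexPathWeight (x : ℕ) (i k : ℕ) : ℝ :=
  if i = 0 then (x + k) / k else 1

theorem pathSum_hexPathWeight (x i k : ℕ) :
    pathSum (hexPathWeight x) i k = (x + i + k).choose k := by
  induction i, k using pathSum.induct with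
  | case1 => simp [pathSum]
  | case2 k ih =>
    have absorption : ((x + k + 1) * (x + k).choose k : ℝ) = (x + k + 1).choose (k + 1) * (k + 1) :=
      mod_cast Nat.add_one_mul_choose_eq (x + k) k
    have hk : (k + 1 : ℝ) ≠ 0 := by positivity
    simp only [pathSum, ih, hexPathWeight, if_true]
    push_cast
    field_simp
    linear_combination absorption
  | case3 i ih => simpa [pathSum] using ih
  | case4 i k ih₁ ih₂ =>
    simp only [pathSum, ih₁, ih₂, hexPathWeight, Nat.succ_ne_zero, if_false, one_mul]
    rw [show x + (i + 1) + (k + 1) = x + (i + 1) + k + 1 by ring, Nat.choose_succ_succ]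
    rw [show x + i + (k + 1) = x + (i + 1) + k by ring]
    push_cast
    ring

section HexagonalLabelling

/-- The vertex in row `i + 1` and the `k`-th even column, for `k` counted from `0`. -/
def evenVertex (i k : ℕ) : ℕ × ℕ :=
  (i + 1, 2 * k + 2)

/-- The vertices in odd columns, column `1` being shifted by one row: this makes `evenVertex i k`
adjacent to `oddVertex i k` and `oddVertex (i + 1) k` for every `k`, including `k = 0`. -/
def oddVertex (i : ℕ) : ℕ → ℕ × ℕ
  | 0 => (i, 1)
  | k + 1 => (i + 1, 2 * (k + 1) + 1)

/-- The entry of `hexWMatrix` at `p` and `q`, extended to pairs that need not be vertices. -/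
noncomputable def hexEntry (n x : ℕ) (p q : ℕ × ℕ) : ℝ :=
  open scoped Classical in
  if hexAdj n p q then hexWeight n x p q else 0

theorem hexAdj_comm (n : ℕ) (p q : ℕ × ℕ) : hexAdj n p q ↔ hexAdj n q p := by
  rw [hexAdj, hexAdj, eq_comm (a := p.1), or_comm (a := p.2 + 1 = _), or_comm (a := p.1 = _ ∧ _)]

theorem hexWeight_comm (n x : ℕ) (p q : ℕ × ℕ) : hexWeight n x p q = hexWeight n x q p := by
  rw [hexWeight, hexWeight, min_comm]
  congr 1
  exact propext (exists_congr fun _ => and_congr_right' (and_congr_right' or_comm))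

theorem hexEntry_comm (n x : ℕ) (p q : ℕ × ℕ) : hexEntry n x p q = hexEntry n x q p := by
  rw [hexEntry, hexEntry, hexAdj_comm, hexWeight_comm]

theorem snd_mod_two_ne_of_hexAdj {n : ℕ} {p q : ℕ × ℕ} (h : hexAdj n p q) : p.2 % 2 ≠ q.2 % 2 := by
  rcases h with ⟨-, h⟩ | ⟨-, h | ⟨k, h⟩⟩ | ⟨-, h | ⟨k, h⟩⟩ <;> omega

theorem hexEntry_eq_zero_of_snd_mod_two_eq {n x : ℕ} {p q : ℕ × ℕ} (h : p.2 % 2 = q.2 % 2) :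
    hexEntry n x p q = 0 :=
  if_neg fun hadj => snd_mod_two_ne_of_hexAdj hadj h

theorem hexAdj_evenVertex_oddVertex {n l : ℕ} (hl : l ≤ n) (i k j : ℕ) :
    hexAdj n (evenVertex i k) (oddVertex j l) ↔
      (j = i ∧ l = k) ∨ (j = i + 1 ∧ l = k) ∨ (j = i ∧ l = k + 1) := by
  rcases l with _ | l <;> simp only [hexAdj, evenVertex, oddVertex]
  · constructor
    · rintro (_ | ⟨_, _ | ⟨_, _⟩⟩ | ⟨_, _ | ⟨_, _⟩⟩) <;> omega
    · rintro (_ | _ | _)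
      · exact .inr (.inl ⟨by omega, .inl ⟨trivial, by omega⟩⟩)
      · omega
      · omega
  · constructor
    · rintro (_ | ⟨_, _ | ⟨_, _⟩⟩ | ⟨_, _ | ⟨_, _⟩⟩) <;> omega
    · rintro (_ | _ | _)
      · omega
      · exact .inr (.inr ⟨by omega, .inr ⟨l + 1, by omega⟩⟩)
      · omega

theorem hexWeight_evenVertex_oddVertex {n l : ℕ} (hl : l ≤ n) (x i k j : ℕ) :
    hexWeight n x (evenVertex i k) (oddVertex j l) =
      if j = i ∧ l = k + 1 then hexPathWeight x j l else 1 := by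
  have special_edge : (∃ a, 1 ≤ a ∧ a ≤ n ∧
      (evenVertex i k = (1, 2 * a) ∧ oddVertex j l = (1, 2 * a + 1) ∨
        oddVertex j l = (1, 2 * a) ∧ evenVertex i k = (1, 2 * a + 1))) ↔
      i = 0 ∧ j = 0 ∧ l = k + 1 := by
    constructor
    · rintro ⟨a, -, -, h⟩
      rcases l with _ | l <;> simp only [evenVertex, oddVertex, Prod.mk.injEq] at h <;> omega
    · rintro ⟨rfl, rfl, rfl⟩
      exact ⟨k + 1, by omega, hl, .inl ⟨rfl, rfl⟩⟩
  simp only [hexWeight, special_edge]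
  by_cases h : i = 0 ∧ j = 0 ∧ l = k + 1
  · obtain ⟨rfl, rfl, rfl⟩ := h
    have half_min : min (evenVertex 0 k).2 (oddVertex 0 (k + 1)).2 / 2 = k + 1 := by
      simp only [evenVertex, oddVertex]
      omega
    simp [half_min, hexPathWeight]
  · grind [hexPathWeight]

theorem hexEntry_evenVertex_oddVertex {n m : ℕ} (x : ℕ) (p q : Fin (m + 1) × Fin (n + 1)) :
    hexEntry n x (evenVertex p.1 p.2) (oddVertex q.1 q.2) =
      gridMatrix (hexPathWeight x) (m + 1) (n + 1) p q := by
  have hq : q.2.val ≤ n := q.2.is_le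
  simp only [hexEntry, hexAdj_evenVertex_oddVertex hq, hexWeight_evenVertex_oddVertex hq,
    gridMatrix]
  grind

/-- The labelling of the vertices of the completed grid by the two sides of a bipartite graph: rows
of the biadjacency matrix are even-column vertices and columns are odd-column vertices. -/
def hexLabel (n m : ℕ) :
    (Fin (m + 1) × Fin (n + 1)) ⊕ (Fin (m + 1) × Fin (n + 1)) → ℕ × ℕ :=
  Sum.elim (fun p => evenVertex p.1 p.2) (fun q => oddVertex q.1 q.2)

theorem oddVertex_snd_mod_two (i k : ℕ) : (oddVertex i k).2 % 2 = 1 := by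
  rcases k with _ | k
  · rfl
  · simp only [oddVertex]
    omega

theorem hexEntry_hexLabel (n m x : ℕ)
    (v w : (Fin (m + 1) × Fin (n + 1)) ⊕ (Fin (m + 1) × Fin (n + 1))) :
    hexEntry n x (hexLabel n m v) (hexLabel n m w) =
      bipartiteMatrix (gridMatrix (hexPathWeight x) (m + 1) (n + 1)) v w := by
  rcases v with p | p <;> rcases w with q | q
  · exact hexEntry_eq_zero_of_snd_mod_two_eq (by simp [hexLabel, evenVertex])
  · exact hexEntry_evenVertex_oddVertex x p q
  · rw [hexEntry_comm]
    exact hexEntry_evenVertex_oddVertex x q p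
  · exact hexEntry_eq_zero_of_snd_mod_two_eq
      ((oddVertex_snd_mod_two _ _).trans (oddVertex_snd_mod_two _ _).symm)

theorem evenVertex_inj {i k j l : ℕ} : evenVertex i k = evenVertex j l ↔ i = j ∧ k = l := by
  simp only [evenVertex, Prod.mk.injEq]
  omega

theorem oddVertex_inj {i k j l : ℕ} : oddVertex i k = oddVertex j l ↔ i = j ∧ k = l := by
  rcases k with _ | k <;> rcases l with _ | l <;> simp only [oddVertex, Prod.mk.injEq] <;> omega

theorem evenVertex_ne_oddVertex (i k j l : ℕ) : evenVertex i k ≠ oddVertex j l := fun h => by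
  have := oddVertex_snd_mod_two j l
  simp only [← h, evenVertex] at this
  omega

theorem hexLabel_injective (n m : ℕ) : Function.Injective (hexLabel n m) := by
  rintro (p | p) (q | q) h
  · obtain ⟨hrow, hcol⟩ := evenVertex_inj.mp h
    exact congrArg Sum.inl (Prod.ext (Fin.ext hrow) (Fin.ext hcol))
  · exact absurd h (evenVertex_ne_oddVertex _ _ _ _)
  · exact absurd h.symm (evenVertex_ne_oddVertex _ _ _ _)
  · obtain ⟨hrow, hcol⟩ := oddVertex_inj.mp h
    exact congrArg Sum.inr (Prod.ext (Fin.ext hrow) (Fin.ext hcol))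

theorem mem_hexVerts {n m : ℕ} {p : ℕ × ℕ} : p ∈ hexVerts n m ↔ hexVertex n m p := by
  simp only [hexVerts, Finset.mem_filter, Finset.mem_product, Finset.mem_range,
    and_iff_right_iff_imp, hexVertex]
  omega

theorem hexLabel_mem_hexVerts {n m : ℕ}
    (v : (Fin (m + 1) × Fin (n + 1)) ⊕ (Fin (m + 1) × Fin (n + 1))) :
    hexLabel n m v ∈ hexVerts n m ↔ ¬IsDeleted (Fin.last m, Fin.last n) (0, 0) v := by
  rw [mem_hexVerts]
  obtain ⟨⟨i, hi⟩, ⟨k, hk⟩⟩ | ⟨⟨i, hi⟩, ⟨_ | k, hk⟩⟩ := v <;>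
    simp only [hexLabel, evenVertex, oddVertex, hexVertex, IsDeleted, Sum.elim_inl, Sum.elim_inr,
      Sum.inl.injEq, Sum.inr.injEq, reduceCtorEq, Prod.mk.injEq, Fin.ext_iff, Fin.val_last,
      Fin.val_zero, or_false, false_or, and_true, and_false, not_false_eq_true, iff_true] <;>
    omega

theorem exists_hexLabel_eq {n m : ℕ} {p : ℕ × ℕ} (hp : p ∈ hexVerts n m) :
    ∃ v, hexLabel n m v = p := by
  rw [mem_hexVerts] at hp
  obtain ⟨i, j⟩ := p
  simp only [hexVertex] at hp
  obtain ⟨k, rfl | rfl⟩ := Nat.even_or_odd' j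
  · refine ⟨.inl (⟨i - 1, by omega⟩, ⟨k - 1, by omega⟩), ?_⟩
    simp only [hexLabel, evenVertex, Sum.elim_inl, Prod.mk.injEq]
    omega
  · rcases k with _ | k
    · exact ⟨.inr (⟨i, by omega⟩, 0), by simp [hexLabel, oddVertex]⟩
    · refine ⟨.inr (⟨i - 1, by omega⟩, ⟨k + 1, by omega⟩), ?_⟩
      simp only [hexLabel, oddVertex, Sum.elim_inr, Prod.mk.injEq, and_true]
      omega

/-- The vertices of the hexagonal grid as those of the completed grid other than the two added
ones, `v_{2n+2}^{m+1}` and `v_1^0`. -/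
noncomputable def hexEquiv (n m : ℕ) :
    {v // ¬IsDeleted (Fin.last m, Fin.last n) (0, 0) v} ≃ {p // p ∈ hexVerts n m} :=
  Equiv.ofBijective (fun v => ⟨hexLabel n m v, (hexLabel_mem_hexVerts v.1).mpr v.2⟩)
    ⟨fun _ _ h => Subtype.ext (hexLabel_injective n m (congrArg Subtype.val h)), by
      rintro ⟨p, hp⟩
      obtain ⟨v, rfl⟩ := exists_hexLabel_eq hp
      exact ⟨⟨v, (hexLabel_mem_hexVerts v).mp hp⟩, rfl⟩⟩

theorem hexWMatrix_submatrix_hexEquiv (n m x : ℕ) :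
    (hexWMatrix n m x).submatrix (hexEquiv n m) (hexEquiv n m) =
      (bipartiteMatrix (gridMatrix (hexPathWeight x) (m + 1) (n + 1))).toSquareBlockProp
        (¬IsDeleted (Fin.last m, Fin.last n) (0, 0) ·) := by
  ext v w
  exact hexEntry_hexLabel n m x v w

end HexagonalLabelling

end HexagonalGrid

open HexagonalGrid

/-- **Theorem 2**.  Fix `n, m ≥ 1` and `x : ℕ`.  Let `A` be the weighted adjacency
matrix of the hexagonal grid `H_{n,m}` in which the edge `v_{2i}¹ v_{2i+1}¹` has weight
`(x+i)/i` for each `1 ≤ i ≤ n` and every other edge has weight `1`.  Then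
`det A = (-1)^(nm+n+m) * (x+n+m choose n)²`. -/
theorem det_weighted_hexagonal_grid (n m x : ℕ) (hn : 1 ≤ n) (hm : 1 ≤ m) :
    (hexWMatrix n m x).det =
      (-1 : ℝ) ^ (n * m + n + m) * ((x + n + m).choose n : ℝ) ^ 2 := by
  rw [← Matrix.det_submatrix_equiv_self (hexEquiv n m), hexWMatrix_submatrix_hexEquiv,
    det_bipartiteMatrix_delete, adjugate_gridMatrix, pathSum_hexPathWeight]
  have sign : (-1 : ℝ) ^ (Fintype.card (Fin (m + 1) × Fin (n + 1)) + 1) =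
      (-1) ^ (n * m + n + m) := by
    rw [Fintype.card_prod, Fintype.card_fin, Fintype.card_fin]
    ring
  have square : ((-1 : ℝ) ^ (m + n)) ^ 2 = 1 := by
    rw [← pow_mul, mul_comm, pow_mul, neg_one_sq, one_pow]
  rw [sign, mul_pow, square, one_mul, Nat.add_right_comm x]
end

section
/- For all integers $k, n \geq 1$, the determinant of the adjacency matrix of the hexagonal grid $H_{n,k}$ equals $(-1)^{kn+n+k} \binom{n+k}{n}^2$. -/
/-- The (0-1) adjacency matrix of the hexagonal grid `H_{n,m}`, indexed by its
vertices. -/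
noncomputable def hexMatrix (n m : ℕ) :
    Matrix {p // p ∈ hexVerts n m} {p // p ∈ hexVerts n m} ℝ :=
  open scoped Classical in
  fun p q => if hexAdj n p.1 q.1 then 1 else 0

/-!
Split the vertices of `H_{n,m}` by the parity of the column. After adding the two positions
`(0, 1)` and `(m + 1, 2n + 2)`, both classes become copies of the poset `[0, m] × [0, n]`, and an
odd site `r` is adjacent to an even site `c` exactly when `c = r` or `c` is covered by `r`. Hence
the adjacency matrix of `H_{n,m}` arises from `K = [0, U; Uᵀ, 0]`, with `U` the unitriangular matrix
of weak covering, by deleting the rows and columns of the two added sites. By Jacobi's complementary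
minor formula its determinant is `det K` times a `2 × 2` minor of `K⁻¹`, and that minor is
`-(U⁻¹ (m, n) (0, 0))²`. Pascal's rule shows that `(-1) ^ (i + j) * (i + j).choose j` is the entry
of `U⁻¹` at `(i, j), (0, 0)`.
-/

theorem bijective_sumElim_val_pair {ν : Type*} {a b : ν} (hab : a ≠ b) :
    Function.Bijective (Sum.elim (Subtype.val : {v // v ≠ a ∧ v ≠ b} → ν) ![a, b]) := by
  refine ⟨Subtype.val_injective.sumElim ?_ ?_, fun v => ?_⟩
  · simp [Function.Injective, Fin.forall_fin_two, hab, hab.symm]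
  · simp [Fin.forall_fin_two]
  · by_cases ha : v = a
    · exact ⟨Sum.inr 0, ha.symm⟩
    by_cases hb : v = b
    · exact ⟨Sum.inr 1, hb.symm⟩
    exact ⟨Sum.inl ⟨v, ha, hb⟩, rfl⟩

section Determinants

open Matrix

variable {R ι κ ν : Type*} [CommRing R] [Fintype ι] [DecidableEq ι] [Fintype κ] [DecidableEq κ]
  [Fintype ν] [DecidableEq ν]

theorem det_fromBlocks_zero₁₁_zero₂₂ (B C : Matrix ι ι R) :
    (fromBlocks 0 B C 0).det = (-1) ^ Fintype.card ι * B.det * C.det := by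
  have factorization : fromBlocks 1 1 0 1 * fromBlocks 0 B C 0 =
      fromBlocks 1 B 1 0 * fromBlocks C 0 0 (1 : Matrix ι ι R) := by
    simp [fromBlocks_multiply]
  have hdet := congrArg det factorization
  rwa [det_mul, det_mul, det_fromBlocks_zero₂₁, det_fromBlocks_zero₂₁, det_fromBlocks_one₁₁,
    Matrix.one_mul, zero_sub, det_neg, det_one, mul_one, one_mul, mul_one] at hdet

theorem det_eq_prod_diag_of_forall_not_le [PartialOrder ι] (M : Matrix ι ι R)
    (hM : ∀ i j, ¬ j ≤ i → M i j = 0) : M.det = ∏ i, M i i := by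
  let e : LinearExtension ι ≃ ι := Equiv.refl ι
  have : Fintype (LinearExtension ι) := .ofEquiv ι e.symm
  have lower : (M.submatrix e e).IsLowerTriangular := fun i j hij =>
    hM _ _ fun hji => (toLinearExtension.monotone hji).not_gt hij
  rw [← det_submatrix_equiv_self e, det_of_isLowerTriangular _ lower]
  exact e.prod_comp fun i => M i i

/-- Jacobi's complementary minor formula. -/
theorem det_submatrix_inl_of_mul_eq_one {M N : Matrix ν ν R} (hMN : M * N = 1) (e : ι ⊕ κ ≃ ν) :
    (M.submatrix (e ∘ Sum.inl) (e ∘ Sum.inl)).det =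
      M.det * (N.submatrix (e ∘ Sum.inr) (e ∘ Sum.inr)).det := by
  let P := M.submatrix e e
  let Q := N.submatrix e e
  have hPQ : fromBlocks P.toBlocks₁₁ P.toBlocks₁₂ P.toBlocks₂₁ P.toBlocks₂₂ *
      fromBlocks Q.toBlocks₁₁ Q.toBlocks₁₂ Q.toBlocks₂₁ Q.toBlocks₂₂ = fromBlocks 1 0 0 1 := by
    rw [fromBlocks_toBlocks, fromBlocks_toBlocks, submatrix_mul_equiv, hMN, submatrix_one_equiv,
      fromBlocks_one]
  rw [fromBlocks_multiply, fromBlocks_inj] at hPQ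
  obtain ⟨-, h₁₂, -, h₂₂⟩ := hPQ
  have completion : P * fromBlocks 1 Q.toBlocks₁₂ 0 Q.toBlocks₂₂ =
      fromBlocks P.toBlocks₁₁ 0 P.toBlocks₂₁ 1 := by
    rw [← fromBlocks_toBlocks P, fromBlocks_multiply, h₁₂, h₂₂]
    simp
  have hdet := congrArg det completion
  rw [det_mul, det_fromBlocks_zero₂₁, det_fromBlocks_zero₁₂, det_one, det_one, one_mul, mul_one,
    det_submatrix_equiv_self] at hdet
  exact hdet.symm

theorem det_submatrix_ne_pair_of_mul_eq_one {M N : Matrix ν ν R} (hMN : M * N = 1) {a b : ν}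
    (hab : a ≠ b) :
    (M.submatrix (Subtype.val : {v // v ≠ a ∧ v ≠ b} → ν) Subtype.val).det =
      M.det * (N a a * N b b - N a b * N b a) := by
  have := det_submatrix_inl_of_mul_eq_one hMN (.ofBijective _ (bijective_sumElim_val_pair hab))
  rwa [det_fin_two] at this

theorem det_fromBlocks_transpose_submatrix_ne_pair {U : Matrix ι ι R} (hU : IsUnit U.det)
    (s t : ι) :
    ((fromBlocks 0 U Uᵀ 0).submatrix
        (Subtype.val : {v : ι ⊕ ι // v ≠ .inl s ∧ v ≠ .inr t} → ι ⊕ ι) Subtype.val).det =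
      (-1) ^ (Fintype.card ι + 1) * (U.det * U⁻¹ t s) ^ 2 := by
  have inverse : fromBlocks 0 U Uᵀ 0 * fromBlocks 0 U⁻¹ᵀ U⁻¹ 0 = 1 := by
    simp [fromBlocks_multiply, ← transpose_mul, hU]
  rw [det_submatrix_ne_pair_of_mul_eq_one inverse Sum.inl_ne_inr, det_fromBlocks_zero₁₁_zero₂₂,
    det_transpose]
  simp only [fromBlocks_apply₁₁, fromBlocks_apply₁₂, fromBlocks_apply₂₁, fromBlocks_apply₂₂,
    transpose_apply, Matrix.zero_apply]
  ring

end Determinants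

section WeakCovering

open scoped Classical in
/-- The `0`-`1` matrix of the weak covering relation of an order: the row of `r` marks `r` itself
and the elements covered by `r`. -/
noncomputable def wcovByMatrix (R α : Type*) [Zero R] [One R] [Preorder α] : Matrix α α R :=
  fun r c => if c ⩿ r then 1 else 0

theorem det_wcovByMatrix {R α : Type*} [CommRing R] [PartialOrder α] [Fintype α]
    [DecidableEq α] : (wcovByMatrix R α).det = 1 := by
  rw [det_eq_prod_diag_of_forall_not_le (wcovByMatrix R α)
    fun r c hcr => if_neg fun h => hcr h.le]
  exact Finset.prod_eq_one fun r _ => if_pos (WCovBy.refl r)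

open scoped Classical in
theorem wcovByMatrix_prod_mulVec {R α β : Type*} [NonAssocSemiring R] [PartialOrder α]
    [PartialOrder β] [Fintype α] [Fintype β] (f : α × β → R) (a : α) (b : β) :
    (wcovByMatrix R (α × β)).mulVec f (a, b) =
      f (a, b) + ∑ x with x ⋖ a, f (x, b) + ∑ y with y ⋖ b, f (a, y) := by
  have split (x : α) (y : β) : wcovByMatrix R (α × β) (a, b) (x, y) * f (x, y) =
      (if y = b then if x = a then f (x, y) else 0 else 0) +
        (if y = b then if x ⋖ a then f (x, y) else 0 else 0) +
        (if x = a then if y ⋖ b then f (x, y) else 0 else 0) := by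
    rw [wcovByMatrix, wcovBy_iff_eq_or_covBy, Prod.mk_covBy_mk_iff, Prod.mk_inj]
    by_cases hx : x = a <;> by_cases hy : y = b <;> simp [hx, hy]
  simp only [Matrix.mulVec, dotProduct, Fintype.sum_prod_type, split, Finset.sum_add_distrib,
    Finset.sum_filter]
  simp

open scoped Classical in
theorem sum_covBy_zero {M : Type*} [AddCommMonoid M] {m : ℕ} (f : Fin (m + 1) → M) :
    ∑ x with x ⋖ 0, f x = 0 := by
  simp

open scoped Classical in
theorem sum_covBy_succ {M : Type*} [AddCommMonoid M] {m : ℕ} (f : Fin (m + 1) → M)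
    (i : Fin m) :
    ∑ x with x ⋖ i.succ, f x = f i.castSucc := by
  have : ({x | x ⋖ i.succ} : Finset (Fin (m + 1))) = {i.castSucc} := by
    ext x
    simp [Fin.ext_iff]
  rw [this, Finset.sum_singleton]

/-- The product of the chains `0 < ⋯ < m` and `0 < ⋯ < n`. -/
abbrev ChainProduct (m n : ℕ) : Type :=
  Fin (m + 1) × Fin (n + 1)

/-- The function `(i, j) ↦ (-1) ^ (i + j) * (i + j).choose j`. Up to sign it counts the saturated
chains from `(0, 0)` to `(i, j)`, and it is the column of `(0, 0)` in the inverse of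
`wcovByMatrix R (ChainProduct m n)`. -/
def signedBinomial (R : Type*) [Ring R] (m n : ℕ) (c : ChainProduct m n) : R :=
  (-1) ^ (c.1 + c.2 : ℕ) * ((c.1 + c.2 : ℕ).choose c.2 : R)

variable {R : Type*} [CommRing R]

theorem wcovByMatrix_mulVec_signedBinomial (m n : ℕ) :
    (wcovByMatrix R _).mulVec (signedBinomial R m n) = Pi.single (0, 0) 1 := by
  ext ⟨i, j⟩
  rw [wcovByMatrix_prod_mulVec]
  cases i using Fin.cases with
  | zero =>
    cases j using Fin.cases with
    | zero => simp [signedBinomial]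
    | succ j =>
      rw [sum_covBy_zero, sum_covBy_succ]
      simp [signedBinomial, pow_succ]
  | succ i =>
    cases j using Fin.cases with
    | zero =>
      rw [sum_covBy_zero, sum_covBy_succ]
      simp [signedBinomial, pow_succ]
    | succ j =>
      have pascal : (i + 1 + (j + 1) : ℕ).choose (j + 1) =
          (i + 1 + j : ℕ).choose j + (i + (j + 1) : ℕ).choose (j + 1) := by
        rw [← add_assoc, Nat.choose_succ_succ, add_right_comm, add_assoc]
      rw [sum_covBy_succ, sum_covBy_succ]
      simp only [signedBinomial, Fin.val_succ, pascal, Nat.cast_add, Fin.val_castSucc, ne_eq,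
        Prod.mk.injEq, Fin.succ_ne_zero, and_self, not_false_eq_true, Pi.single_eq_of_ne]
      ring

theorem wcovByMatrix_inv_last_zero (m n : ℕ) :
    (wcovByMatrix R (ChainProduct m n))⁻¹ (Fin.last m, Fin.last n) (0, 0) =
      (-1) ^ (m + n) * ((m + n).choose n : R) := by
  have column : signedBinomial R m n = (wcovByMatrix R _)⁻¹.mulVec (Pi.single (0, 0) 1) := by
    rw [← wcovByMatrix_mulVec_signedBinomial, Matrix.mulVec_mulVec,
      Matrix.nonsing_inv_mul _ (by simp [det_wcovByMatrix]), Matrix.one_mulVec]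
  have hlast := congrFun column (Fin.last m, Fin.last n)
  rw [Matrix.mulVec_single_one] at hlast
  simpa [signedBinomial] using hlast.symm

end WeakCovering

section HexagonalGrid

open Matrix

variable {n m : ℕ}

theorem mem_hexVerts {p : ℕ × ℕ} : p ∈ hexVerts n m ↔ hexVertex n m p := by
  simp only [hexVerts, Finset.mem_filter, Finset.mem_product, Finset.mem_range, hexVertex]
  omega

theorem hexAdj_comm {p q : ℕ × ℕ} : hexAdj n p q ↔ hexAdj n q p := by
  unfold hexAdj
  rw [eq_comm, or_comm (a := p.2 + 1 = q.2), or_comm (b := q.1 = p.1 + 1 ∧ _)]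

theorem not_hexAdj_of_even_add {p q : ℕ × ℕ} (h : Even (p.2 + q.2)) : ¬ hexAdj n p q := by
  rw [Nat.even_iff] at h
  rintro (h | ⟨_, h | ⟨k, h⟩⟩ | ⟨_, h | ⟨k, h⟩⟩) <;> omega

/-- Places two copies of the product of chains on the hexagonal lattice, in coordinates
`(row, column)`: the first copy fills the odd columns and the second one the even columns. In the
odd columns other than `1` the row is shifted by one, because their vertical edges lead to the
preceding row and those of column `1` to the next one. The element `(0, 0)` of the first copy goes
to `(0, 1)` and the element `(m, n)` of the second copy to `(m + 1, 2 * n + 2)`; these two positions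
are not vertices of `H_{n,m}`, all others are. -/
def hexSite (n m : ℕ) : ChainProduct m n ⊕ ChainProduct m n → ℕ × ℕ :=
  Sum.elim (fun r => (if (r.2 : ℕ) = 0 then r.1 else r.1 + 1, 2 * r.2 + 1))
    fun c => (c.1 + 1, 2 * c.2 + 2)

theorem hexSite_injective : Function.Injective (hexSite n m) := by
  refine Function.Injective.sumElim ?_ ?_ ?_ <;>
  · rintro ⟨x, y⟩ ⟨x', y'⟩
    simp only [Prod.mk.injEq, Fin.ext_iff, ne_eq]
    grind

theorem hexSite_mem_hexVerts {s : ChainProduct m n ⊕ ChainProduct m n} :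
    hexSite n m s ∈ hexVerts n m ↔ s ≠ .inl (0, 0) ∧ s ≠ .inr (Fin.last m, Fin.last n) := by
  rw [mem_hexVerts]
  rcases s with ⟨x, y⟩ | ⟨x, y⟩ <;>
  · simp only [hexVertex, hexSite, Sum.elim_inl, Sum.elim_inr, ne_eq, Sum.inl.injEq, Sum.inr.injEq,
      reduceCtorEq, not_false_eq_true, true_and, and_true, Prod.mk.injEq, Fin.ext_iff,
      Fin.val_zero, Fin.val_last]
    grind

theorem exists_hexSite_eq {p : ℕ × ℕ} (hp : hexVertex n m p) : ∃ s, hexSite n m s = p := by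
  obtain ⟨i, j⟩ := p
  simp only [hexVertex] at hp
  obtain ⟨y, rfl | rfl⟩ : ∃ y, j = 2 * y + 1 ∨ j = 2 * y + 2 := ⟨(j - 1) / 2, by omega⟩
  · refine ⟨.inl (⟨if y = 0 then i else i - 1, by grind⟩, ⟨y, by omega⟩), ?_⟩
    simp only [hexSite, Sum.elim_inl, Prod.mk.injEq]
    grind
  · refine ⟨.inr (⟨i - 1, by omega⟩, ⟨y, by omega⟩), ?_⟩
    simp only [hexSite, Sum.elim_inr, Prod.mk.injEq]
    grind

/-- `hexSite` as a bijection onto the vertices of `H_{n,m}`. -/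
noncomputable def hexSiteEquiv (n m : ℕ) :
    {s : ChainProduct m n ⊕ ChainProduct m n //
      s ≠ .inl (0, 0) ∧ s ≠ .inr (Fin.last m, Fin.last n)} ≃ {p // p ∈ hexVerts n m} :=
  .ofBijective (fun s => ⟨hexSite n m s, hexSite_mem_hexVerts.2 s.2⟩)
    ⟨fun _ _ h => Subtype.ext (hexSite_injective (congrArg Subtype.val h)), fun ⟨p, hp⟩ => by
      obtain ⟨s, rfl⟩ := exists_hexSite_eq (mem_hexVerts.1 hp)
      exact ⟨⟨s, hexSite_mem_hexVerts.1 hp⟩, rfl⟩⟩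

theorem hexAdj_hexSite_inl_inr (r c : ChainProduct m n) :
    hexAdj n (hexSite n m (.inl r)) (hexSite n m (.inr c)) ↔ c ⩿ r := by
  obtain ⟨x, y⟩ := r
  obtain ⟨x', y'⟩ := c
  simp only [wcovBy_iff_eq_or_covBy, Prod.mk_covBy_mk_iff, Prod.mk.injEq, Fin.ext_iff,
    Fin.covBy_iff, Nat.covBy_iff_add_one_eq, hexAdj, hexSite, Sum.elim_inl, Sum.elim_inr]
  constructor
  · rintro (h | ⟨_, h | ⟨k, h⟩⟩ | ⟨_, h | ⟨k, h⟩⟩) <;> grind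
  · rintro (⟨hx, hy⟩ | ⟨hx, hy⟩ | ⟨hy, hx⟩)
    · grind
    · by_cases hy₀ : (y : ℕ) = 0
      · grind
      · exact .inr (.inl ⟨by grind, .inr ⟨y, by omega⟩⟩)
    · grind

open scoped Classical in
theorem ite_hexAdj_hexSite (s t : ChainProduct m n ⊕ ChainProduct m n) :
    (if hexAdj n (hexSite n m s) (hexSite n m t) then 1 else 0) =
      fromBlocks 0 (wcovByMatrix ℝ _) (wcovByMatrix ℝ _)ᵀ 0 s t := by
  rcases s with r | r <;> rcases t with c | c
  · refine if_neg (not_hexAdj_of_even_add ⟨r.2 + c.2 + 1, ?_⟩)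
    simp only [hexSite, Sum.elim_inl]
    ring
  · exact if_congr (hexAdj_hexSite_inl_inr r c) rfl rfl
  · exact if_congr (hexAdj_comm.trans (hexAdj_hexSite_inl_inr c r)) rfl rfl
  · refine if_neg (not_hexAdj_of_even_add ⟨r.2 + c.2 + 2, ?_⟩)
    simp only [hexSite, Sum.elim_inr]
    ring

theorem hexMatrix_submatrix_hexSiteEquiv :
    (hexMatrix n m).submatrix (hexSiteEquiv n m) (hexSiteEquiv n m) =
      (fromBlocks 0 (wcovByMatrix ℝ (ChainProduct m n)) (wcovByMatrix ℝ _)ᵀ 0).submatrix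
        Subtype.val Subtype.val := by
  ext s t
  exact ite_hexAdj_hexSite s.1 t.1

end HexagonalGrid

/-- **Theorem 3**.  For all integers `k, n ≥ 1`, the determinant of the adjacency matrix
of the hexagonal grid `H_{n,k}` equals `(-1)^(kn+n+k) * (n+k choose n)²`. -/
theorem det_hexagonal_grid (k n : ℕ) (hk : 1 ≤ k) (hn : 1 ≤ n) :
    (hexMatrix n k).det =
      (-1 : ℝ) ^ (k * n + n + k) * ((n + k).choose n : ℝ) ^ 2 := by
  set U := wcovByMatrix ℝ (ChainProduct k n)
  have hU : U.det = 1 := det_wcovByMatrix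
  have hcard : Fintype.card (ChainProduct k n) + 1 = k * n + n + k + 2 := by
    simp only [ChainProduct, Fintype.card_prod, Fintype.card_fin]
    ring
  calc (hexMatrix n k).det
      = ((Matrix.fromBlocks 0 U U.transpose 0).submatrix Subtype.val Subtype.val).det := by
        rw [← Matrix.det_submatrix_equiv_self (hexSiteEquiv n k), hexMatrix_submatrix_hexSiteEquiv]
    _ = (-1) ^ (k * n + n + k + 2) * (U⁻¹ (Fin.last k, Fin.last n) (0, 0)) ^ 2 := by
        rw [det_fromBlocks_transpose_submatrix_ne_pair (hU ▸ isUnit_one), hU, one_mul, hcard]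
    _ = (-1) ^ (k * n + n + k) * ((n + k).choose n : ℝ) ^ 2 := by
        rw [wcovByMatrix_inv_last_zero, mul_pow, pow_right_comm, pow_add, neg_one_sq, one_pow,
          one_mul, mul_one, add_comm n k]
end

section
/- For all integers $k, n \geq 1$, the hexagonal grid $H_{n,k}$ is non-singular; that is, the determinant of its adjacency matrix is nonzero. -/
/-
The grid is a parallelogram of `n × m` hexagons. In the coordinates `(i, k)` with `0 ≤ i ≤ m`,
`0 ≤ k ≤ n`, its even-column vertices and its odd-column vertices each fill a rectangle with one
corner removed, and the two families are exchanged by the half-turn of the parallelogram. The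
graph is bipartite between them, and a null vector `x` restricted to one family (the odd
one after a half-turn) satisfies `x(i, k) + x(i - 1, k) + x(i, k - 1) = 0` except at `(0, 0)`. Hence
`x(i, k) = (-1)^(i + k) * choose (i + k) k * x(0, 0)`; since `(m, n)` is the removed corner,
`x(m, n) = 0`, and the nonvanishing of the binomial coefficient forces `x = 0`.
-/

section SignedPascal

/-- The recurrence of Pascal's triangle with a sign change, on the rectangle
`[1, m + 1] × [1, n + 1]`. Row and column `0` carry the zero boundary values, and the apex `g 1 1`
is free. -/
structure IsSignedPascal {R : Type*} [AddMonoid R] (m n : ℕ) (g : ℕ → ℕ → R) : Prop where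
  row_zero : ∀ k, g 0 k = 0
  col_zero : ∀ i, g i 0 = 0
  rec_eq_zero : ∀ i ≤ m, ∀ k ≤ n, 0 < i + k → g (i + 1) (k + 1) + g i (k + 1) + g (i + 1) k = 0

namespace IsSignedPascal

variable {R : Type*} [Ring R] {m n : ℕ} {g : ℕ → ℕ → R}

theorem eq_choose_mul (hg : IsSignedPascal m n g) :
    ∀ i ≤ m, ∀ k ≤ n, g (i + 1) (k + 1) = (-1) ^ (i + k) * (i + k).choose k * g 1 1 := by
  intro i
  induction i with
  | zero =>
    intro _ k
    induction k with
    | zero => simp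
    | succ k ihk =>
      intro hk
      have hrec := hg.rec_eq_zero 0 (by omega) (k + 1) hk (by omega)
      rw [hg.row_zero, add_zero] at hrec
      rw [eq_neg_of_add_eq_zero_left hrec, ihk (by omega)]
      simp [pow_succ]
  | succ i ihi =>
    intro hi k
    induction k with
    | zero =>
      intro hk
      have hrec := hg.rec_eq_zero (i + 1) hi 0 hk (by omega)
      rw [hg.col_zero, add_zero] at hrec
      rw [eq_neg_of_add_eq_zero_left hrec, ihi (by omega) 0 hk]
      simp [pow_succ]
    | succ k ihk =>
      intro hk
      have hrec := hg.rec_eq_zero (i + 1) hi (k + 1) hk (by omega)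
      have hchoose : (i + 1 + (k + 1)).choose (k + 1) =
          (i + (k + 1)).choose (k + 1) + (i + 1 + k).choose k := by
        rw [← add_assoc, Nat.choose_succ_succ, add_comm, add_right_comm i 1 k, add_assoc i k 1]
      rw [add_assoc] at hrec
      rw [eq_neg_of_add_eq_zero_left hrec, ihi (by omega) (k + 1) hk, ihk (by omega), hchoose]
      push_cast
      simp only [pow_add, pow_one]
      noncomm_ring

theorem eq_zero_of_corner [NoZeroDivisors R] [CharZero R] (hg : IsSignedPascal m n g)
    (hcorner : g (m + 1) (n + 1) = 0) {i k : ℕ} (hi : i ≤ m) (hk : k ≤ n) :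
    g (i + 1) (k + 1) = 0 := by
  have hchoose : ((m + n).choose n : R) ≠ 0 :=
    Nat.cast_ne_zero.2 (Nat.choose_pos (Nat.le_add_left n m)).ne'
  have hapex : g 1 1 = 0 := by
    simpa [hchoose] using (hg.eq_choose_mul m le_rfl n le_rfl).symm.trans hcorner
  rw [hg.eq_choose_mul i hi k hk, hapex, mul_zero]

end IsSignedPascal

end SignedPascal

section Coordinates

/-- The odd-column vertex with parallelogram coordinates `(i, k)`, chosen so that its neighbours
are the even-column vertices `(i + 1, 2 * k + 2)`, `(i, 2 * k + 2)` and `(i + 1, 2 * k)`. The first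
column is shifted by one row because its vertical edges go down rather than up. -/
def oddVertex (i : ℕ) : ℕ → ℕ × ℕ
  | 0 => (i, 1)
  | k + 1 => (i + 1, 2 * k + 3)

variable {n m i k : ℕ}

theorem mk_mem_hexVerts {j : ℕ} : (i, j) ∈ hexVerts n m ↔
    (1 ≤ i ∧ i ≤ m ∧ 1 ≤ j ∧ j ≤ 2 * n + 2) ∨ (i = m + 1 ∧ 2 ≤ j ∧ j ≤ 2 * n + 1) := by
  simp only [hexVerts, hexVertex, Finset.mem_filter, Finset.mem_product, Finset.mem_range]
  omega

theorem oddVertex_mem_hexVerts :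
    oddVertex i k ∈ hexVerts n m ↔ i ≤ m ∧ k ≤ n ∧ 0 < i + k := by
  cases k <;> simp only [oddVertex, mk_mem_hexVerts] <;> omega

theorem even_mem_hexVerts :
    (i + 1, 2 * k + 2) ∈ hexVerts n m ↔ i ≤ m ∧ k ≤ n ∧ i + k < m + n := by
  rw [mk_mem_hexVerts]
  omega

theorem exists_coordinates {p : ℕ × ℕ} (hp : p ∈ hexVerts n m) :
    ∃ i ≤ m, ∃ k ≤ n, p = (i + 1, 2 * k + 2) ∨ p = oddVertex i k := by
  obtain ⟨r, j⟩ := p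
  rw [mk_mem_hexVerts] at hp
  obtain ⟨l, rfl | rfl⟩ := Nat.even_or_odd' j
  · refine ⟨r - 1, by omega, l - 1, by omega, .inl ?_⟩
    ext <;> simp only <;> omega
  · cases l with
    | zero => exact ⟨r, by omega, 0, by omega, .inr rfl⟩
    | succ l =>
      refine ⟨r - 1, by omega, l + 1, by omega, .inr ?_⟩
      ext <;> simp only [oddVertex] <;> omega

theorem hexAdj_mk_iff {j i' j' : ℕ} : hexAdj n (i, j) (i', j') ↔
    (i = i' ∧ (j + 1 = j' ∨ j' + 1 = j)) ∨
    (i = i' + 1 ∧ ((j' = 1 ∧ j = 2) ∨ (j' = j + 1 ∧ j % 2 = 1 ∧ 3 ≤ j ∧ j ≤ 2 * n + 1))) ∨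
    (i' = i + 1 ∧ ((j = 1 ∧ j' = 2) ∨ (j = j' + 1 ∧ j' % 2 = 1 ∧ 3 ≤ j' ∧ j' ≤ 2 * n + 1))) := by
  have exists_half (a b : ℕ) : (∃ k, 1 ≤ k ∧ k ≤ n ∧ a = 2 * k + 2 ∧ b = 2 * k + 1) ↔
      (a = b + 1 ∧ b % 2 = 1 ∧ 3 ≤ b ∧ b ≤ 2 * n + 1) :=
    ⟨by rintro ⟨k, h⟩; omega, fun h => ⟨b / 2, by omega⟩⟩
  simp only [hexAdj, exists_half]

theorem hexAdj_oddVertex_iff (hk : k ≤ n) {q : ℕ × ℕ} (hq : q ∈ hexVerts n m) :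
    hexAdj n (oddVertex i k) q ↔
      q ∈ ({(i + 1, 2 * k + 2), (i, 2 * k + 2), (i + 1, 2 * k)} : Finset (ℕ × ℕ)) := by
  obtain ⟨r, j⟩ := q
  rw [mk_mem_hexVerts] at hq
  cases k <;>
    simp only [oddVertex, hexAdj_mk_iff, Finset.mem_insert, Finset.mem_singleton, Prod.mk.injEq,
      true_and] <;>
    omega

theorem hexAdj_even_iff {q : ℕ × ℕ} (hq : q ∈ hexVerts n m) :
    hexAdj n (i + 1, 2 * k + 2) q ↔
      q ∈ ({oddVertex i k, oddVertex (i + 1) k, oddVertex i (k + 1)} : Finset (ℕ × ℕ)) := by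
  obtain ⟨r, j⟩ := q
  rw [mk_mem_hexVerts] at hq
  cases k <;>
    simp only [oddVertex, hexAdj_mk_iff, Finset.mem_insert, Finset.mem_singleton, Prod.mk.injEq,
      and_true] <;>
    omega

end Coordinates

section NullFunctions

open scoped Classical in
/-- A null vector of the adjacency matrix of `H_{n,m}`, extended by zero to all of `ℕ × ℕ` so that
the neighbours missing at the boundary need no case distinction. -/
structure IsHexNull {R : Type*} [AddCommMonoid R] (n m : ℕ) (x : ℕ × ℕ → R) : Prop where
  eq_zero_of_notMem : ∀ p ∉ hexVerts n m, x p = 0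
  sum_adj_eq_zero : ∀ p ∈ hexVerts n m, ∑ q ∈ hexVerts n m with hexAdj n p q, x q = 0

theorem isHexNull_extend {n m : ℕ} {v : {p // p ∈ hexVerts n m} → ℝ}
    (hv : (hexMatrix n m).mulVec v = 0) : IsHexNull n m (Function.extend Subtype.val v 0) where
  eq_zero_of_notMem p hp := Function.extend_apply' _ _ _ (by rintro ⟨q, rfl⟩; exact hp q.2)
  sum_adj_eq_zero p hp := by
    classical
    rw [Finset.sum_filter, ← Finset.sum_coe_sort]
    simpa only [Subtype.val_injective.extend_apply, Matrix.mulVec, dotProduct, hexMatrix, ite_mul,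
      one_mul, zero_mul, Pi.zero_apply] using congrFun hv ⟨p, hp⟩

namespace IsHexNull

section AddCommMonoid

variable {R : Type*} [AddCommMonoid R] {n m : ℕ} {x : ℕ × ℕ → R}

theorem sum_eq_zero (hx : IsHexNull n m x) {p : ℕ × ℕ} (hp : p ∈ hexVerts n m)
    {S : Finset (ℕ × ℕ)} (hS : ∀ q ∈ hexVerts n m, hexAdj n p q ↔ q ∈ S) :
    ∑ q ∈ S, x q = 0 := by
  classical
  rw [← hx.sum_adj_eq_zero p hp, Finset.filter_congr hS]
  refine (Finset.sum_subset (fun q hq => (Finset.mem_filter.1 hq).2) fun q hqS hq => ?_).symm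
  exact hx.eq_zero_of_notMem q fun hqV => hq (Finset.mem_filter.2 ⟨hqV, hqS⟩)

theorem add_even_eq_zero (hx : IsHexNull n m x) {i k : ℕ} (hi : i ≤ m) (hk : k ≤ n)
    (hik : 0 < i + k) : x (i + 1, 2 * k + 2) + x (i, 2 * k + 2) + x (i + 1, 2 * k) = 0 := by
  have hsum := hx.sum_eq_zero (oddVertex_mem_hexVerts.2 ⟨hi, hk, hik⟩)
    fun q hq => hexAdj_oddVertex_iff hk hq
  rwa [Finset.sum_insert (by simp), Finset.sum_pair (by simp), ← add_assoc] at hsum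

theorem add_oddVertex_eq_zero (hx : IsHexNull n m x) {i k : ℕ} (hi : i ≤ m) (hk : k ≤ n)
    (hik : i + k < m + n) :
    x (oddVertex i k) + x (oddVertex (i + 1) k) + x (oddVertex i (k + 1)) = 0 := by
  have hsum := hx.sum_eq_zero (even_mem_hexVerts.2 ⟨hi, hk, hik⟩) fun q hq => hexAdj_even_iff hq
  rwa [Finset.sum_insert (by cases k <;> simp [oddVertex]),
    Finset.sum_pair (by cases k <;> simp [oddVertex]), ← add_assoc] at hsum

theorem isSignedPascal_even (hx : IsHexNull n m x) :
    IsSignedPascal m n fun i k => x (i, 2 * k) where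
  row_zero k := hx.eq_zero_of_notMem _ (by rw [mk_mem_hexVerts]; omega)
  col_zero i := hx.eq_zero_of_notMem _ (by rw [mk_mem_hexVerts]; omega)
  rec_eq_zero _ hi _ hk hik := hx.add_even_eq_zero hi hk hik

-- The half-turn of the parallelogram puts the apex of the odd family at coordinates `(m, n)`.
theorem isSignedPascal_odd (hx : IsHexNull n m x) :
    IsSignedPascal m n fun i k => x (oddVertex (m + 1 - i) (n + 1 - k)) where
  row_zero k := hx.eq_zero_of_notMem _ (by rw [oddVertex_mem_hexVerts]; omega)
  col_zero i := hx.eq_zero_of_notMem _ (by rw [oddVertex_mem_hexVerts]; omega)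
  rec_eq_zero i hi k hk hik := by
    have hrec := hx.add_oddVertex_eq_zero (Nat.sub_le m i) (Nat.sub_le n k) (by omega)
    simpa only [Nat.add_sub_add_right, Nat.sub_add_comm hi, Nat.sub_add_comm hk] using hrec

end AddCommMonoid

variable {R : Type*} [Ring R] [NoZeroDivisors R] [CharZero R] {n m : ℕ} {x : ℕ × ℕ → R}

theorem even_eq_zero (hx : IsHexNull n m x) {i k : ℕ} (hi : i ≤ m) (hk : k ≤ n) :
    x (i + 1, 2 * k + 2) = 0 :=
  hx.isSignedPascal_even.eq_zero_of_corner
    (hx.eq_zero_of_notMem _ (by rw [mk_mem_hexVerts]; omega)) hi hk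

theorem oddVertex_eq_zero (hx : IsHexNull n m x) {i k : ℕ} (hi : i ≤ m) (hk : k ≤ n) :
    x (oddVertex i k) = 0 := by
  have hcorner : x (oddVertex (m + 1 - (m + 1)) (n + 1 - (n + 1))) = 0 :=
    hx.eq_zero_of_notMem _ (by rw [oddVertex_mem_hexVerts]; omega)
  simpa only [Nat.add_sub_add_right, Nat.sub_sub_self hi, Nat.sub_sub_self hk] using
    hx.isSignedPascal_odd.eq_zero_of_corner hcorner (Nat.sub_le m i) (Nat.sub_le n k)

theorem eq_zero (hx : IsHexNull n m x) : x = 0 := by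
  funext p
  by_cases hp : p ∈ hexVerts n m
  · obtain ⟨i, hi, k, hk, rfl | rfl⟩ := exists_coordinates hp
    · exact hx.even_eq_zero hi hk
    · exact hx.oddVertex_eq_zero hi hk
  · exact hx.eq_zero_of_notMem p hp

end IsHexNull

end NullFunctions

/-- For all integers `k, n ≥ 1`, the hexagonal grid `H_{n,k}` is non-singular: the
determinant of its adjacency matrix is nonzero. -/
theorem hexagonal_grid_nonsingular (k n : ℕ) (hk : 1 ≤ k) (hn : 1 ≤ n) :
    (hexMatrix n k).det ≠ 0 := by
  intro hdet
  obtain ⟨v, hv_ne, hv⟩ := Matrix.exists_mulVec_eq_zero_iff.2 hdet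
  refine hv_ne (funext fun p => ?_)
  rw [← Subtype.val_injective.extend_apply v 0 p, (isHexNull_extend hv).eq_zero]
  rfl
end
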